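/- arXiv:1308.0980 — 2 statements merged into one kernel-verified Lean document; each statement's English description precedes it below -/
import Mathlib

section
/- Let Ω ⊆ ℝⁿ be an exterior domain (complement of a compact set), n ≥ 3, and let 1 < r < s < ∞. Then the set 𝒞₀(Ω) of smooth compactly supported divergence-free vector fields on Ω is dense in J^r(Ω) ∩ J^s(Ω) with respect to the norm ‖·‖_{L^r} + ‖·‖_{L^s}, where J^t(Ω) denotes the closure of 𝒞₀(Ω) in L^t(Ω). -/
open scoped BigOperators
open MeasureTheory

noncomputable def Dmat {n : ℕ} (u : (Fin n → ℝ) → Fin n → ℝ) (x : Fin n → ℝ) :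
    Matrix (Fin n) (Fin n) ℝ :=
  fun i j => fderiv ℝ u x (Pi.single j 1) i

noncomputable def divg {n : ℕ} (u : (Fin n → ℝ) → Fin n → ℝ) (x : Fin n → ℝ) : ℝ :=
  ∑ i, Dmat u x i i

/-- Smooth divergence-free vector field compactly supported in `Ω`. -/
def IsTestIn {n : ℕ} (Ω : Set (Fin n → ℝ)) (φ : (Fin n → ℝ) → Fin n → ℝ) : Prop :=
  ContDiff ℝ (⊤ : ℕ∞) φ ∧ HasCompactSupport φ ∧ tsupport φ ⊆ Ω ∧ ∀ x, divg φ x = 0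

/-- Euclidean `L^t(Ω)` norm of a vector field. -/
noncomputable def LtNorm {n : ℕ} (Ω : Set (Fin n → ℝ)) (t : ℝ)
    (f : (Fin n → ℝ) → Fin n → ℝ) : ℝ :=
  (∫ x in Ω, Real.sqrt (∑ i, (f x i) ^ 2) ^ t) ^ (1 / t)

/-- The divergence is the trace of the derivative. -/
lemma divg_eq {n : ℕ} (u : (Fin n → ℝ) → Fin n → ℝ) (x : Fin n → ℝ) :
    divg u x = ∑ i, fderiv ℝ u x (Pi.single i 1) i := rfl

section ParametricIntegral

variable {E G : Type} [NormedAddCommGroup E] [NormedSpace ℝ E] [FiniteDimensional ℝ E]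
  [NormedAddCommGroup G] [NormedSpace ℝ G]

lemma hasFDerivAt_intervalIntegral_of_contDiff {F : E → ℝ → G}
    (hF : ContDiff ℝ 1 (Function.uncurry F)) (x₀ : E) :
    HasFDerivAt (fun x => ∫ t in (0 : ℝ)..1, F x t)
      (∫ t in (0 : ℝ)..1, fderiv ℝ (fun x => F x t) x₀) x₀ := by
  have hc' : Continuous (fun p : E × ℝ => fderiv ℝ (fun x => F x p.2) p.1) := by
    have h : ContDiff ℝ 1 (Function.uncurry (fun (p : E × ℝ) (x : E) => F x p.2)) := by
      have : ContDiff ℝ 1 (fun q : (E × ℝ) × E => (q.2, q.1.2)) := by fun_prop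
      exact hF.comp this
    exact (ContDiff.fderiv h (contDiff_fst (n := 0)) (by norm_num)).continuous
  have hK : IsCompact (Metric.closedBall x₀ 1 ×ˢ Set.Icc (0 : ℝ) 1) :=
    (isCompact_closedBall x₀ 1).prod isCompact_Icc
  obtain ⟨C, hC⟩ := hK.exists_bound_of_continuousOn hc'.continuousOn
  have hcF : ∀ x, Continuous (F x) := fun x =>
    hF.continuous.comp (by fun_prop : Continuous fun t : ℝ => (x, t))
  refine intervalIntegral.hasFDerivAt_integral_of_dominated_of_fderiv_le (𝕜 := ℝ)
    (F := F) (F' := fun x t => fderiv ℝ (fun x => F x t) x) (bound := fun _ => C)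
    (Metric.closedBall_mem_nhds x₀ one_pos)
    (Filter.Eventually.of_forall fun x => (hcF x).aestronglyMeasurable)
    ((hcF x₀).intervalIntegrable _ _) ?_ ?_ intervalIntegrable_const ?_
  · exact (hc'.comp (by fun_prop : Continuous fun t : ℝ => (x₀, t))).aestronglyMeasurable
  · refine Filter.Eventually.of_forall fun t ht x hx => hC (x, t) ⟨hx, ?_⟩
    rw [Set.uIoc_of_le zero_le_one] at ht
    exact ⟨ht.1.le, ht.2⟩
  · refine Filter.Eventually.of_forall fun t _ x _ => ?_
    have : ContDiff ℝ 1 (fun x => F x t) :=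
      hF.comp (by fun_prop : ContDiff ℝ 1 fun x : E => (x, t))
    exact (this.differentiable (by norm_num) x).hasFDerivAt

end ParametricIntegral

lemma contDiff_nat_intervalIntegral {E : Type} [NormedAddCommGroup E] [NormedSpace ℝ E]
    [FiniteDimensional ℝ E] (k : ℕ) :
    ∀ {G : Type} [NormedAddCommGroup G] [NormedSpace ℝ G] {F : E → ℝ → G},
      ContDiff ℝ (⊤ : ℕ∞) (Function.uncurry F) →
      ContDiff ℝ k (fun x => ∫ t in (0 : ℝ)..1, F x t) := by
  induction k with
  | zero =>
    intro G _ _ F hF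
    have h : Differentiable ℝ (fun x => ∫ t in (0 : ℝ)..1, F x t) := fun x =>
      (hasFDerivAt_intervalIntegral_of_contDiff (hF.of_le (by exact_mod_cast le_top))
        x).differentiableAt
    simpa using (contDiff_zero (𝕜 := ℝ)).2 h.continuous
  | succ k ih =>
    intro G _ _ F hF
    have hd := hasFDerivAt_intervalIntegral_of_contDiff (hF.of_le (by exact_mod_cast le_top))
    push_cast
    refine (contDiff_succ_iff_hasFDerivAt (𝕜 := ℝ)).2 ⟨_, ih ?_, hd⟩
    have h : ContDiff ℝ (⊤ : ℕ∞) (Function.uncurry (fun (p : E × ℝ) (x : E) => F x p.2)) := by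
      have : ContDiff ℝ (⊤ : ℕ∞) (fun q : (E × ℝ) × E => (q.2, q.1.2)) := by fun_prop
      exact hF.comp this
    exact ContDiff.fderiv h contDiff_fst (by simp)

lemma contDiff_intervalIntegral {E G : Type} [NormedAddCommGroup E] [NormedSpace ℝ E]
    [FiniteDimensional ℝ E] [NormedAddCommGroup G] [NormedSpace ℝ G] {F : E → ℝ → G}
    (hF : ContDiff ℝ (⊤ : ℕ∞) (Function.uncurry F)) :
    ContDiff ℝ (⊤ : ℕ∞) (fun x => ∫ t in (0 : ℝ)..1, F x t) :=
  contDiff_infty.2 fun k => contDiff_nat_intervalIntegral k hF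

/-- The averaged field `x ↦ ∫₀¹ tᵏ φ(a + t(x - a)) dt` of the Poincaré homotopy centred at `a`. -/
noncomputable def radialMean {n : ℕ} (k : ℕ) (φ : (Fin n → ℝ) → Fin n → ℝ) (a x : Fin n → ℝ) :
    Fin n → ℝ :=
  ∫ t in (0 : ℝ)..1, t ^ k • φ (a + t • (x - a))

section RadialMean

variable {n k : ℕ} {φ : (Fin n → ℝ) → Fin n → ℝ}

lemma contDiff_radialMean_integrand (hφ : ContDiff ℝ (⊤ : ℕ∞) φ) (a : Fin n → ℝ) :
    ContDiff ℝ (⊤ : ℕ∞)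
      (Function.uncurry fun (x : Fin n → ℝ) (t : ℝ) => t ^ k • φ (a + t • (x - a))) := by
  have h : ContDiff ℝ (⊤ : ℕ∞) (fun p : (Fin n → ℝ) × ℝ => a + p.2 • (p.1 - a)) := by fun_prop
  exact (contDiff_snd.pow k).smul (hφ.comp h)

lemma contDiff_radialMean (hφ : ContDiff ℝ (⊤ : ℕ∞) φ) (a : Fin n → ℝ) :
    ContDiff ℝ (⊤ : ℕ∞) (radialMean k φ a) :=
  contDiff_intervalIntegral (contDiff_radialMean_integrand hφ a)

lemma fderiv_radialMean_apply (hφ : ContDiff ℝ (⊤ : ℕ∞) φ) (a x w : Fin n → ℝ) :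
    fderiv ℝ (radialMean k φ a) x w =
      ∫ t in (0 : ℝ)..1, t ^ (k + 1) • fderiv ℝ φ (a + t • (x - a)) w := by
  have hd : ∀ t : ℝ, fderiv ℝ (fun x : Fin n → ℝ => t ^ k • φ (a + t • (x - a))) x =
      t ^ (k + 1) • fderiv ℝ φ (a + t • (x - a)) := by
    intro t
    have h1 : HasFDerivAt (fun x : Fin n → ℝ => a + t • (x - a))
        (t • ContinuousLinearMap.id ℝ (Fin n → ℝ)) x :=
      (((hasFDerivAt_id x).sub_const a).const_smul t).const_add a
    have h2 := ((hφ.differentiable (by simp) (a + t • (x - a))).hasFDerivAt.comp x h1).const_smul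
      (t ^ k)
    refine h2.fderiv.trans ?_
    ext v i
    simp [pow_succ, mul_assoc]
  have h := hasFDerivAt_intervalIntegral_of_contDiff
    ((contDiff_radialMean_integrand (k := k) hφ a).of_le (by exact_mod_cast le_top)) x
  have hcont : Continuous fun t : ℝ => t ^ (k + 1) • fderiv ℝ φ (a + t • (x - a)) := by
    have := hφ.continuous_fderiv (by simp)
    fun_prop
  simp only [hd] at h
  unfold radialMean
  rw [h.fderiv, ContinuousLinearMap.intervalIntegral_apply (hcont.intervalIntegrable _ _)]
  rfl

lemma divg_radialMean (hφ : ContDiff ℝ (⊤ : ℕ∞) φ) (hdiv : ∀ x, divg φ x = 0)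
    (a x : Fin n → ℝ) : divg (radialMean k φ a) x = 0 := by
  have hc := hφ.continuous_fderiv (by simp)
  have happ : ∀ i, fderiv ℝ (radialMean k φ a) x (Pi.single i 1) i =
      ∫ t in (0 : ℝ)..1, t ^ (k + 1) * fderiv ℝ φ (a + t • (x - a)) (Pi.single i 1) i := by
    intro i
    have hcont : Continuous fun t : ℝ =>
        t ^ (k + 1) • fderiv ℝ φ (a + t • (x - a)) (Pi.single i 1) := by fun_prop
    rw [fderiv_radialMean_apply hφ]
    exact ((ContinuousLinearMap.proj (R := ℝ) (φ := fun _ : Fin n => ℝ)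
      i).intervalIntegral_comp_comm (hcont.intervalIntegrable _ _)).symm
  rw [divg_eq]
  simp only [happ]
  rw [← intervalIntegral.integral_finsetSum]
  · have hz : ∀ t : ℝ, ∑ i, t ^ (k + 1) * fderiv ℝ φ (a + t • (x - a)) (Pi.single i 1) i = 0 := by
      intro t
      rw [← Finset.mul_sum, ← divg_eq, hdiv, mul_zero]
    simp [hz]
  · intro i _
    exact Continuous.intervalIntegrable (by fun_prop) _ _

lemma fderiv_radialMean_radial (hφ : ContDiff ℝ (⊤ : ℕ∞) φ) (a x : Fin n → ℝ) :
    fderiv ℝ (radialMean k φ a) x (x - a) + ((k : ℝ) + 1) • radialMean k φ a x = φ x := by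
  have hc := hφ.continuous_fderiv (by simp)
  have hc0 := hφ.continuous
  have hcont1 : Continuous fun t : ℝ =>
    t ^ (k + 1) • fderiv ℝ φ (a + t • (x - a)) (x - a) := by fun_prop
  have hcont2 : Continuous fun t : ℝ => ((k : ℝ) + 1) • t ^ k • φ (a + t • (x - a)) := by fun_prop
  rw [fderiv_radialMean_apply hφ, radialMean, ← intervalIntegral.integral_smul,
    ← intervalIntegral.integral_add (hcont1.intervalIntegrable _ _)
      (hcont2.intervalIntegrable _ _)]
  have hder : ∀ t ∈ Set.uIcc (0 : ℝ) 1, HasDerivAt (fun t : ℝ => t ^ (k + 1) • φ (a + t • (x - a)))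
      (t ^ (k + 1) • fderiv ℝ φ (a + t • (x - a)) (x - a) +
        ((k : ℝ) + 1) • t ^ k • φ (a + t • (x - a))) t := by
    intro t _
    have h1 : HasDerivAt (fun t : ℝ => a + t • (x - a)) (x - a) t := by
      simpa using ((hasDerivAt_id t).smul_const (x - a)).const_add a
    have h2 := (hφ.differentiable (by simp) (a + t • (x - a))).hasFDerivAt.comp_hasDerivAt t h1
    have h3 := (hasDerivAt_pow (k + 1) t).smul h2
    have h4 : ((k : ℝ) + 1) • t ^ k • φ (a + t • (x - a)) =
        (((k + 1 : ℕ) : ℝ) * t ^ (k + 1 - 1)) • φ (a + t • (x - a)) := by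
      simp [mul_smul]
    rw [h4]
    exact h3
  rw [intervalIntegral.integral_eq_sub_of_hasDerivAt hder
    ((hcont1.add hcont2).intervalIntegrable _ _)]
  simp

end RadialMean

section Divergence

variable {n : ℕ}

lemma divg_add {u w : (Fin n → ℝ) → Fin n → ℝ} {x : Fin n → ℝ} (hu : DifferentiableAt ℝ u x)
    (hw : DifferentiableAt ℝ w x) : divg (fun y => u y + w y) x = divg u x + divg w x := by
  simp [divg_eq, fderiv_fun_add hu hw, Finset.sum_add_distrib]

lemma divg_sub {u w : (Fin n → ℝ) → Fin n → ℝ} {x : Fin n → ℝ} (hu : DifferentiableAt ℝ u x)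
    (hw : DifferentiableAt ℝ w x) : divg (fun y => u y - w y) x = divg u x - divg w x := by
  simp [divg_eq, fderiv_fun_sub hu hw, Finset.sum_sub_distrib]

lemma divg_smul {g : (Fin n → ℝ) → ℝ} {u : (Fin n → ℝ) → Fin n → ℝ} {x : Fin n → ℝ}
    (hg : DifferentiableAt ℝ g x) (hu : DifferentiableAt ℝ u x) :
    divg (fun y => g y • u y) x = g x * divg u x + fderiv ℝ g x (u x) := by
  have h : fderiv ℝ g x (u x) = ∑ i, fderiv ℝ g x (Pi.single i 1) * u x i := by
    conv_lhs => rw [pi_eq_sum_univ' (u x), map_sum]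
    refine Finset.sum_congr rfl fun i _ => ?_
    rw [map_smul, smul_eq_mul, mul_comm]
  simp [divg_eq, fderiv_fun_smul hg hu, Finset.sum_add_distrib, Finset.mul_sum, h]

lemma divg_sub_const (a x : Fin n → ℝ) : divg (fun y => y - a) x = n := by
  simp [divg_eq, fderiv_sub_const]

end Divergence

/-- Divergence-free localisation of a divergence-free field `φ` by a cut-off `χ`: the field
`∑ⱼ ∂ⱼ(χ Aᵢⱼ)`, where `A` is the skew-symmetric potential of `φ` centred at `a`. -/
noncomputable def solenoidalCutoff {n : ℕ} (k : ℕ) (χ : (Fin n → ℝ) → ℝ)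
    (φ : (Fin n → ℝ) → Fin n → ℝ) (a x : Fin n → ℝ) : Fin n → ℝ :=
  (χ x • φ x + (fderiv ℝ χ x (x - a)) • radialMean k φ a x) -
    (fderiv ℝ χ x (radialMean k φ a x)) • (x - a)

section SolenoidalCutoff

variable {n k : ℕ} {χ : (Fin n → ℝ) → ℝ} {φ : (Fin n → ℝ) → Fin n → ℝ}

lemma contDiff_solenoidalCutoff (hχ : ContDiff ℝ (⊤ : ℕ∞) χ) (hφ : ContDiff ℝ (⊤ : ℕ∞) φ)
    (a : Fin n → ℝ) : ContDiff ℝ (⊤ : ℕ∞) (solenoidalCutoff k χ φ a) := by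
  have hP := contDiff_radialMean (k := k) hφ a
  have hD : ContDiff ℝ (⊤ : ℕ∞) (fderiv ℝ χ) := hχ.fderiv_right (by simp)
  unfold solenoidalCutoff
  fun_prop

lemma divg_solenoidalCutoff (hk : n = k + 2) (hχ : ContDiff ℝ (⊤ : ℕ∞) χ)
    (hφ : ContDiff ℝ (⊤ : ℕ∞) φ) (hdiv : ∀ x, divg φ x = 0) (a x : Fin n → ℝ) :
    divg (solenoidalCutoff k χ φ a) x = 0 := by
  have hP := (contDiff_radialMean (k := k) hφ a).differentiable (by simp) x
  have hD : DifferentiableAt ℝ (fderiv ℝ χ) x :=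
    (hχ.fderiv_right (m := (⊤ : ℕ∞)) (by simp)).differentiable (by simp) x
  have hφd := hφ.differentiable (by simp) x
  have hχd := hχ.differentiable (by simp) x
  have hxa : DifferentiableAt ℝ (fun y : Fin n → ℝ => y - a) x := by fun_prop
  have hsymm : IsSymmSndFDerivAt ℝ χ x :=
    (hχ.contDiffAt (x := x)).isSymmSndFDerivAt
      (by simpa using WithTop.coe_le_coe.2 (le_top : (2 : ℕ∞) ≤ ⊤))
  have hg1 : DifferentiableAt ℝ (fun y => fderiv ℝ χ y (y - a)) x := hD.clm_apply hxa
  have hg2 : DifferentiableAt ℝ (fun y => fderiv ℝ χ y (radialMean k φ a y)) x := hD.clm_apply hP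
  have hd1 : ∀ w, fderiv ℝ (fun y => fderiv ℝ χ y (y - a)) x w =
      fderiv ℝ (fderiv ℝ χ) x w (x - a) + fderiv ℝ χ x w := by
    intro w
    rw [fderiv_clm_apply hD hxa]
    simp [fderiv_sub_const, add_comm]
  have hd2 : ∀ w, fderiv ℝ (fun y => fderiv ℝ χ y (radialMean k φ a y)) x w =
      fderiv ℝ (fderiv ℝ χ) x w (radialMean k φ a x) +
        fderiv ℝ χ x (fderiv ℝ (radialMean k φ a) x w) := by
    intro w
    rw [fderiv_clm_apply hD hP]
    simp [add_comm]
  have hrad := congrArg (fderiv ℝ χ x) (fderiv_radialMean_radial (k := k) hφ a x)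
  rw [map_add, map_smul, smul_eq_mul] at hrad
  unfold solenoidalCutoff
  rw [divg_sub ((hχd.fun_smul hφd).fun_add (hg1.fun_smul hP)) (hg2.fun_smul hxa),
    divg_add (hχd.fun_smul hφd) (hg1.fun_smul hP), divg_smul hχd hφd, divg_smul hg1 hP,
    divg_smul hg2 hxa, hd1, hd2, hdiv, divg_radialMean hφ hdiv, divg_sub_const,
    hsymm.eq (radialMean k φ a x) (x - a), ← hrad]
  have : (n : ℝ) = k + 2 := by exact_mod_cast hk
  rw [this]
  ring

end SolenoidalCutoff

section Averaging

open scoped ENNReal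

variable {n : ℕ}

lemma lintegral_comp_affine_le {g : (Fin n → ℝ) → ℝ≥0∞} (hg : Measurable g) {c : ℝ}
    (hc : 1 / 2 ≤ c) (b : Fin n → ℝ) :
    ∫⁻ x, g (b + c • x) ≤ 2 ^ n * ∫⁻ y, g y := by
  have hc0 : 0 < c := by linarith
  have h1 : ∫⁻ x, g (b + c • x) = ∫⁻ y, g (b + y) ∂(Measure.map (c • ·) volume) := by
    rw [lintegral_map (by fun_prop) (by fun_prop)]
  rw [h1, Measure.map_addHaar_smul volume hc0.ne', lintegral_smul_measure,
    lintegral_add_left_eq_self g b, smul_eq_mul]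
  gcongr
  have h2 : |(c ^ Module.finrank ℝ (Fin n → ℝ))⁻¹| ≤ 2 ^ n := by
    rw [Module.finrank_fin_fun, abs_of_pos (by positivity), ← inv_pow]
    refine pow_le_pow_left₀ (by positivity) ?_ n
    rw [inv_le_comm₀ hc0 two_pos]
    linarith
  calc ENNReal.ofReal |(c ^ Module.finrank ℝ (Fin n → ℝ))⁻¹|
      ≤ ENNReal.ofReal (2 ^ n) := ENNReal.ofReal_le_ofReal h2
    _ = 2 ^ n := by rw [ENNReal.ofReal_pow zero_le_two]; simp

lemma measurable_comp_segment {g : (Fin n → ℝ) → ℝ≥0∞} (hg : Measurable g) :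
    Measurable fun q : (Fin n → ℝ) × (Fin n → ℝ) × ℝ => g (q.1 + q.2.2 • (q.2.1 - q.1)) :=
  hg.comp (by fun_prop)

/-- Averages of `g` over segments joining two balls are controlled by the integral of `g`:
one integrates in the end point that is the farther one along the segment. -/
lemma lintegral_segment_le {g : (Fin n → ℝ) → ℝ≥0∞} (hg : Measurable g)
    {A B : Set (Fin n → ℝ)} (hAB : A ⊆ B) :
    ∫⁻ a in A, ∫⁻ x in B, ∫⁻ t in Set.Ioc (0 : ℝ) 1, g (a + t • (x - a)) ≤
      2 ^ n * (∫⁻ y, g y) * volume B := by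
  have hm := measurable_comp_segment hg
  have hswap : ∫⁻ a in A, ∫⁻ x in B, ∫⁻ t in Set.Ioc (0 : ℝ) 1, g (a + t • (x - a)) =
      ∫⁻ t in Set.Ioc (0 : ℝ) 1, ∫⁻ a in A, ∫⁻ x in B, g (a + t • (x - a)) := by
    have h1 : ∀ a, ∫⁻ x in B, ∫⁻ t in Set.Ioc (0 : ℝ) 1, g (a + t • (x - a)) =
        ∫⁻ t in Set.Ioc (0 : ℝ) 1, ∫⁻ x in B, g (a + t • (x - a)) := fun a =>
      lintegral_lintegral_swap (hm.comp (by fun_prop :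
        Measurable fun p : (Fin n → ℝ) × ℝ => (a, p.1, p.2))).aemeasurable
    simp only [h1]
    refine lintegral_lintegral_swap (Measurable.aemeasurable ?_)
    exact Measurable.lintegral_prod_right' (f := fun q : ((Fin n → ℝ) × ℝ) × (Fin n → ℝ) =>
      g (q.1.1 + q.1.2 • (q.2 - q.1.1))) (hm.comp (by fun_prop :
        Measurable fun q : ((Fin n → ℝ) × ℝ) × (Fin n → ℝ) => (q.1.1, q.2, q.1.2)))
  rw [hswap]
  have hbound : ∀ t : ℝ, ∫⁻ a in A, ∫⁻ x in B, g (a + t • (x - a)) ≤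
      2 ^ n * (∫⁻ y, g y) * volume B := by
    intro t
    rcases le_total (1 / 2) t with ht | ht
    · calc ∫⁻ a in A, ∫⁻ x in B, g (a + t • (x - a))
          ≤ ∫⁻ a in A, 2 ^ n * ∫⁻ y, g y := by
            refine lintegral_mono fun a => (setLIntegral_le_lintegral _ _).trans ?_
            refine le_trans (le_of_eq ?_) (lintegral_comp_affine_le hg ht (a - t • a))
            congr 1 with x
            congr 1
            rw [smul_sub]
            abel
        _ = 2 ^ n * (∫⁻ y, g y) * volume A := by rw [setLIntegral_const]
        _ ≤ _ := by gcongr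
    · calc ∫⁻ a in A, ∫⁻ x in B, g (a + t • (x - a))
          = ∫⁻ x in B, ∫⁻ a in A, g (a + t • (x - a)) :=
            lintegral_lintegral_swap (hm.comp (by fun_prop :
              Measurable fun p : (Fin n → ℝ) × (Fin n → ℝ) => (p.1, p.2, t))).aemeasurable
        _ ≤ ∫⁻ x in B, 2 ^ n * ∫⁻ y, g y := by
            refine lintegral_mono fun x => (setLIntegral_le_lintegral _ _).trans ?_
            refine le_trans (le_of_eq ?_)
              (lintegral_comp_affine_le hg (c := 1 - t) (by linarith) (t • x))
            congr 1 with a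
            congr 1
            rw [smul_sub, sub_smul, one_smul]
            abel
        _ = 2 ^ n * (∫⁻ y, g y) * volume B := by rw [setLIntegral_const]
  calc ∫⁻ t in Set.Ioc (0 : ℝ) 1, ∫⁻ a in A, ∫⁻ x in B, g (a + t • (x - a))
      ≤ ∫⁻ t in Set.Ioc (0 : ℝ) 1, 2 ^ n * (∫⁻ y, g y) * volume B := lintegral_mono hbound
    _ = _ := by simp

lemma exists_center {g : (Fin n → ℝ) → ℝ≥0∞} (hg : Measurable g) {R : ℝ} (hR : 0 < R) :
    ∃ a ∈ Metric.closedBall (0 : Fin n → ℝ) (R / 2),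
      ∫⁻ x in Metric.closedBall (0 : Fin n → ℝ) (2 * R), ∫⁻ t in Set.Ioc (0 : ℝ) 1,
        g (a + t • (x - a)) ≤ 8 ^ n * ∫⁻ y, g y := by
  have hpos : volume (Metric.closedBall (0 : Fin n → ℝ) (R / 2)) ≠ 0 :=
    (Metric.measure_closedBall_pos volume _ (by positivity)).ne'
  have hfin : volume (Metric.closedBall (0 : Fin n → ℝ) (R / 2)) ≠ ∞ :=
    (isCompact_closedBall _ _).measure_lt_top.ne
  have hm := measurable_comp_segment hg
  have hmeas : Measurable fun a : Fin n → ℝ =>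
      ∫⁻ x in Metric.closedBall (0 : Fin n → ℝ) (2 * R), ∫⁻ t in Set.Ioc (0 : ℝ) 1,
        g (a + t • (x - a)) := by
    refine Measurable.lintegral_prod_right' (f := fun p : (Fin n → ℝ) × (Fin n → ℝ) =>
      ∫⁻ t in Set.Ioc (0 : ℝ) 1, g (p.1 + t • (p.2 - p.1))) ?_
    exact Measurable.lintegral_prod_right' (f := fun q : ((Fin n → ℝ) × (Fin n → ℝ)) × ℝ =>
      g (q.1.1 + q.2 • (q.1.2 - q.1.1))) (hm.comp (by fun_prop :
        Measurable fun q : ((Fin n → ℝ) × (Fin n → ℝ)) × ℝ => (q.1.1, q.1.2, q.2)))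
  obtain ⟨a, ha, hle⟩ := exists_le_setLAverage hpos hfin hmeas.aemeasurable
  refine ⟨a, ha, hle.trans ?_⟩
  rw [setLAverage_eq, ENNReal.div_le_iff hpos hfin]
  refine (lintegral_segment_le hg (Metric.closedBall_subset_closedBall (by linarith))).trans
    (le_of_eq ?_)
  have hvol : volume (Metric.closedBall (0 : Fin n → ℝ) (2 * R)) =
      4 ^ n * volume (Metric.closedBall (0 : Fin n → ℝ) (R / 2)) := by
    rw [show 2 * R = 4 * (R / 2) by ring,
      Measure.addHaar_closedBall_mul volume 0 (by norm_num : (0 : ℝ) ≤ 4) (by positivity),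
      Module.finrank_fin_fun, ENNReal.ofReal_pow (by norm_num)]
    simp
  rw [hvol, show (8 : ℝ≥0∞) = 2 * 4 by norm_num, mul_pow]
  ring

end Averaging

section Holder

open scoped ENNReal

variable {α : Type*} [MeasurableSpace α] {μ : Measure α}

lemma lintegral_rpow_le_of_le {h : α → ℝ≥0∞} (hh : AEMeasurable h μ) {p q : ℝ} (hp : 0 < p)
    (hpq : p ≤ q) :
    ∫⁻ x, h x ^ p ∂μ ≤ (∫⁻ x, h x ^ q ∂μ) ^ (p / q) * μ Set.univ ^ (1 - p / q) := by
  have hq : 0 < q := hp.trans_le hpq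
  have h1 := eLpNorm'_le_eLpNorm'_mul_rpow_measure_univ hp hpq hh.aestronglyMeasurable
  simp only [eLpNorm', enorm_eq_self] at h1
  have h2 := ENNReal.rpow_le_rpow h1 hp.le
  rw [ENNReal.mul_rpow_of_nonneg _ _ hp.le, ← ENNReal.rpow_mul, ← ENNReal.rpow_mul,
    ← ENNReal.rpow_mul, one_div_mul_cancel hp.ne', ENNReal.rpow_one] at h2
  convert h2 using 3
  · ring
  · field_simp

lemma lintegral_rpow_le_measure_mul {h : α → ℝ≥0∞} (hh : AEMeasurable h μ) {p : ℝ} (hp : 1 ≤ p) :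
    (∫⁻ x, h x ∂μ) ^ p ≤ μ Set.univ ^ (p - 1) * ∫⁻ x, h x ^ p ∂μ := by
  have hp0 : 0 < p := by linarith
  have h1 := lintegral_rpow_le_of_le hh one_pos hp
  simp only [ENNReal.rpow_one] at h1
  have h2 := ENNReal.rpow_le_rpow h1 hp0.le
  rw [ENNReal.mul_rpow_of_nonneg _ _ hp0.le, ← ENNReal.rpow_mul, ← ENNReal.rpow_mul,
    one_div_mul_cancel hp0.ne', ENNReal.rpow_one, mul_comm] at h2
  convert h2 using 3
  field_simp

end Holder

section PointwiseBound

open scoped ENNReal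

variable {n k : ℕ} {φ : (Fin n → ℝ) → Fin n → ℝ}

/-- The density controlling the `p`-th power of `radialMean`: the tail of `φ` outside the ball
of radius `M`, plus a small multiple of `φ`. -/
noncomputable def tailDensity (φ : (Fin n → ℝ) → Fin n → ℝ) (δ : ℝ≥0∞) (M p : ℝ)
    (y : Fin n → ℝ) : ℝ≥0∞ :=
  δ ^ (p - 1) * ‖φ y‖ₑ ^ p + {y | M ≤ ‖y‖}.indicator (fun y => ‖φ y‖ₑ ^ p) y

lemma measurable_tailDensity (hφ : Measurable φ) (δ : ℝ≥0∞) (M p : ℝ) :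
    Measurable (tailDensity φ δ M p) := by
  have h : Measurable fun y => ‖φ y‖ₑ ^ p := hφ.enorm.pow_const p
  exact (h.const_mul _).add (h.indicator (measurableSet_le measurable_const measurable_norm))

lemma volume_segment_inter_ball_le {a x : Fin n → ℝ} {R M : ℝ} (hR : 0 < R)
    (hxa : R / 2 ≤ ‖x - a‖) :
    volume {t : ℝ | ‖a + t • (x - a)‖ < M} ≤ ENNReal.ofReal (4 * M / R) := by
  refine (Real.volume_le_diam _).trans (Metric.ediam_le fun t ht u hu => ?_)
  rw [edist_dist, Real.dist_eq]
  refine ENNReal.ofReal_le_ofReal ?_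
  simp only [Set.mem_ofPred_eq] at ht hu
  have h1 : |t - u| * ‖x - a‖ ≤ 2 * M := by
    rw [← Real.norm_eq_abs, ← norm_smul]
    have h2 : (t - u) • (x - a) = (a + t • (x - a)) - (a + u • (x - a)) := by
      rw [sub_smul]
      abel
    rw [h2]
    linarith [norm_sub_le (a + t • (x - a)) (a + u • (x - a))]
  rw [le_div_iff₀ hR]
  nlinarith [abs_nonneg (t - u)]

lemma enorm_radialMean_le (a x : Fin n → ℝ) :
    ‖radialMean k φ a x‖ₑ ≤ ∫⁻ t in Set.Ioc (0 : ℝ) 1, ‖φ (a + t • (x - a))‖ₑ := by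
  rw [radialMean, intervalIntegral.integral_of_le zero_le_one]
  refine (enorm_integral_le_lintegral_enorm _).trans ?_
  refine setLIntegral_mono' measurableSet_Ioc fun t ht => ?_
  rw [enorm_smul]
  refine mul_le_of_le_one_left' ?_
  rw [Real.enorm_eq_ofReal (pow_nonneg ht.1.le k)]
  exact ENNReal.ofReal_le_one.2 (pow_le_one₀ ht.1.le ht.2)

lemma enorm_radialMean_rpow_le (hφ : Continuous φ) {a x : Fin n → ℝ} {R M p : ℝ} (hR : 0 < R)
    (hp : 1 < p) (hxa : R / 2 ≤ ‖x - a‖) :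
    ‖radialMean k φ a x‖ₑ ^ p ≤ 2 ^ (p - 1) * ∫⁻ t in Set.Ioc (0 : ℝ) 1,
      tailDensity φ (ENNReal.ofReal (4 * M / R)) M p (a + t • (x - a)) := by
  set T : Set ℝ := {t | ‖a + t • (x - a)‖ < M} with hT
  have hTm : MeasurableSet T := measurableSet_lt (by fun_prop) measurable_const
  set h : ℝ → ℝ≥0∞ := fun t => ‖φ (a + t • (x - a))‖ₑ with hh
  have hhm : Measurable h := by
    have : Continuous fun t : ℝ => φ (a + t • (x - a)) := by fun_prop
    exact this.measurable.enorm
  set μ : Measure ℝ := volume.restrict (Set.Ioc (0 : ℝ) 1)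
  have hμ1 : μ Set.univ = 1 := by simp [μ]
  have hμT : (μ.restrict T) Set.univ ≤ ENNReal.ofReal (4 * M / R) := by
    rw [Measure.restrict_apply_univ]
    exact (Measure.restrict_apply_le _ _).trans (volume_segment_inter_ball_le hR hxa)
  have hTc : (μ.restrict Tᶜ) Set.univ ≤ 1 := by
    rw [Measure.restrict_apply_univ, ← hμ1]
    exact measure_mono (Set.subset_univ _)
  have hin : (∫⁻ t in T, h t ∂μ) ^ p ≤ ENNReal.ofReal (4 * M / R) ^ (p - 1) * ∫⁻ t, h t ^ p ∂μ :=
    (lintegral_rpow_le_measure_mul hhm.aemeasurable hp.le).trans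
      (mul_le_mul' (ENNReal.rpow_le_rpow hμT (by linarith)) (setLIntegral_le_lintegral _ _))
  have hout : (∫⁻ t in Tᶜ, h t ∂μ) ^ p ≤ ∫⁻ t in Tᶜ, h t ^ p ∂μ := by
    refine (lintegral_rpow_le_measure_mul hhm.aemeasurable hp.le).trans ?_
    refine mul_le_of_le_one_left' ?_
    calc _ ≤ (1 : ℝ≥0∞) ^ (p - 1) := ENNReal.rpow_le_rpow hTc (by linarith)
      _ = 1 := ENNReal.one_rpow _
  have hdens : ∀ t, tailDensity φ (ENNReal.ofReal (4 * M / R)) M p (a + t • (x - a)) =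
      ENNReal.ofReal (4 * M / R) ^ (p - 1) * h t ^ p + Tᶜ.indicator (fun t => h t ^ p) t := by
    intro t
    simp [tailDensity, hT, hh, Set.indicator_apply]
  have hhp : Measurable fun t => h t ^ p := hhm.pow_const p
  calc ‖radialMean k φ a x‖ₑ ^ p ≤ (∫⁻ t, h t ∂μ) ^ p :=
        ENNReal.rpow_le_rpow (enorm_radialMean_le a x) (by linarith)
    _ = (∫⁻ t in T, h t ∂μ + ∫⁻ t in Tᶜ, h t ∂μ) ^ p := by rw [lintegral_add_compl h hTm]
    _ ≤ 2 ^ (p - 1) * ((∫⁻ t in T, h t ∂μ) ^ p + (∫⁻ t in Tᶜ, h t ∂μ) ^ p) :=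
        ENNReal.rpow_add_le_mul_rpow_add_rpow _ _ hp.le
    _ ≤ 2 ^ (p - 1) * (ENNReal.ofReal (4 * M / R) ^ (p - 1) * ∫⁻ t, h t ^ p ∂μ +
          ∫⁻ t in Tᶜ, h t ^ p ∂μ) := by gcongr
    _ = _ := by
        simp only [hdens]
        rw [lintegral_add_left (hhp.const_mul _), lintegral_const_mul _ hhp,
          lintegral_indicator hTm.compl]

end PointwiseBound

section Localisation

open scoped ENNReal

variable {n : ℕ}

lemma exists_scaled_cutoff (n : ℕ) : ∃ C : ℝ, 0 ≤ C ∧ ∀ R : ℝ, 0 < R →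
    ∃ χ : (Fin n → ℝ) → ℝ, ContDiff ℝ (⊤ : ℕ∞) χ ∧ (∀ x, 0 ≤ χ x ∧ χ x ≤ 1) ∧
      (∀ x, ‖x‖ ≤ R → χ x = 1) ∧ (∀ x, 2 * R ≤ ‖x‖ → χ x = 0) ∧
      ∀ x, ‖fderiv ℝ χ x‖ ≤ C / R := by
  let f : ContDiffBump (0 : Fin n → ℝ) := ⟨1, 2, one_pos, one_lt_two⟩
  have hf : ContDiff ℝ (⊤ : ℕ∞) f := f.contDiff
  obtain ⟨C, hC⟩ := (hf.continuous_fderiv (by simp)).bounded_above_of_compact_support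
    (f.hasCompactSupport.fderiv ℝ)
  refine ⟨C, (norm_nonneg _).trans (hC 0), fun R hR => ⟨fun x => f (R⁻¹ • x),
    hf.comp (by fun_prop), fun x => ⟨f.nonneg, f.le_one⟩, fun x hx => ?_, fun x hx => ?_,
    fun x => ?_⟩⟩
  · refine f.one_of_mem_closedBall ?_
    rw [mem_closedBall_zero_iff, norm_smul, norm_inv, Real.norm_of_nonneg hR.le]
    exact (inv_mul_le_iff₀ hR).2 (by simpa [f] using hx)
  · refine f.zero_of_le_dist ?_
    rw [dist_zero_right, norm_smul, norm_inv, Real.norm_of_nonneg hR.le, le_inv_mul_iff₀ hR]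
    simp only [f]
    linarith
  · have h1 : HasFDerivAt (fun x : Fin n → ℝ => R⁻¹ • x)
        (R⁻¹ • ContinuousLinearMap.id ℝ (Fin n → ℝ)) x :=
      (R⁻¹ • ContinuousLinearMap.id ℝ (Fin n → ℝ)).hasFDerivAt
    have h2 := (hf.differentiable (by simp) (R⁻¹ • x)).hasFDerivAt.comp x h1
    have h3 : fderiv ℝ (fun x => f (R⁻¹ • x)) x = R⁻¹ • fderiv ℝ f (R⁻¹ • x) := by
      refine h2.fderiv.trans ?_
      ext v
      simp
    rw [h3, norm_smul, norm_inv, Real.norm_of_nonneg hR.le, div_eq_inv_mul]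
    gcongr
    exact hC _

lemma enorm_solenoidalCutoff_sub_le {k : ℕ} {χ : (Fin n → ℝ) → ℝ}
    {φ : (Fin n → ℝ) → Fin n → ℝ} {a x : Fin n → ℝ} {C R : ℝ} (hC : 0 ≤ C) (hR : 0 < R)
    (hχ : ‖fderiv ℝ χ x‖ ≤ C / R) (ha : ‖a‖ ≤ R / 2) (hx : ‖x‖ ≤ 2 * R) :
    ‖solenoidalCutoff k χ φ a x - χ x • φ x‖ₑ ≤
      ENNReal.ofReal (6 * C) * ‖radialMean k φ a x‖ₑ := by
  have hxa : ‖x - a‖ ≤ 3 * R := (norm_sub_le x a).trans (by linarith)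
  set P := radialMean k φ a x
  have h : solenoidalCutoff k χ φ a x - χ x • φ x =
      (fderiv ℝ χ x (x - a)) • P - (fderiv ℝ χ x P) • (x - a) := by
    unfold solenoidalCutoff
    abel
  have h1 : ∀ w, ‖fderiv ℝ χ x w‖ ≤ C / R * ‖w‖ := fun w =>
    (ContinuousLinearMap.le_opNorm _ _).trans (by gcongr)
  have h2 : ‖solenoidalCutoff k χ φ a x - χ x • φ x‖ ≤ 6 * C * ‖P‖ := by
    rw [h]
    calc ‖(fderiv ℝ χ x (x - a)) • P - (fderiv ℝ χ x P) • (x - a)‖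
        ≤ ‖fderiv ℝ χ x (x - a)‖ * ‖P‖ + ‖fderiv ℝ χ x P‖ * ‖x - a‖ := by
          rw [← norm_smul, ← norm_smul]
          exact norm_sub_le _ _
      _ ≤ C / R * (3 * R) * ‖P‖ + C / R * ‖P‖ * (3 * R) := by
          gcongr
          · exact (h1 _).trans (by gcongr)
          · exact h1 _
      _ = 6 * C * ‖P‖ := by
          field_simp
          ring
  rw [← ofReal_norm, ← ofReal_norm, ← ENNReal.ofReal_mul (by positivity)]
  exact ENNReal.ofReal_le_ofReal h2

lemma solenoidalCutoff_eq_of_fderiv_eq_zero {k : ℕ} {χ : (Fin n → ℝ) → ℝ}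
    {φ : (Fin n → ℝ) → Fin n → ℝ} {a x : Fin n → ℝ} (h : fderiv ℝ χ x = 0) :
    solenoidalCutoff k χ φ a x = χ x • φ x := by
  simp [solenoidalCutoff, h]

/-- Divergence-free truncation at radius `R`, with control of the error in two Lebesgue norms. -/
lemma exists_solenoidal_truncation (hn : 2 ≤ n) {r s : ℝ} (hr : 1 < r) (hs : 1 < s) :
    ∃ C : ℝ≥0∞, C ≠ ∞ ∧ ∀ φ : (Fin n → ℝ) → Fin n → ℝ, ContDiff ℝ (⊤ : ℕ∞) φ →
      (∀ x, divg φ x = 0) → ∀ R M : ℝ, 0 < R →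
      ∃ (χ : (Fin n → ℝ) → ℝ) (ψ : (Fin n → ℝ) → Fin n → ℝ), ContDiff ℝ (⊤ : ℕ∞) χ ∧
        (∀ x, 0 ≤ χ x ∧ χ x ≤ 1) ∧
        (∀ x, ‖x‖ ≤ R → χ x = 1) ∧ (∀ x, 2 * R ≤ ‖x‖ → χ x = 0) ∧
        ContDiff ℝ (⊤ : ℕ∞) ψ ∧ (∀ x, divg ψ x = 0) ∧ (∀ x, ‖x‖ < R → ψ x = φ x) ∧
        (∀ x, 2 * R < ‖x‖ → ψ x = 0) ∧
        ∀ p, p = r ∨ p = s → ∫⁻ x, ‖ψ x - χ x • φ x‖ₑ ^ p ≤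
          C * ∫⁻ y in Metric.closedBall 0 (2 * R),
            (tailDensity φ (ENNReal.ofReal (4 * M / R)) M r y +
              tailDensity φ (ENNReal.ofReal (4 * M / R)) M s y) := by
  obtain ⟨k, hk⟩ : ∃ k, n = k + 2 := ⟨n - 2, by omega⟩
  obtain ⟨C₀, hC₀, hcut⟩ := exists_scaled_cutoff n
  set c : ℝ → ℝ≥0∞ := fun p => ENNReal.ofReal (6 * C₀) ^ p * 2 ^ (p - 1) with hc
  have hcfin : ∀ p, 1 < p → c p ≠ ∞ := fun p hp => ENNReal.mul_ne_top
    (ENNReal.rpow_ne_top_of_nonneg (by linarith) ENNReal.ofReal_ne_top)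
    (ENNReal.rpow_ne_top_of_nonneg (by linarith) (by simp))
  refine ⟨(c r + c s) * 8 ^ n, ENNReal.mul_ne_top (ENNReal.add_ne_top.2 ⟨hcfin r hr, hcfin s hs⟩)
    (by simp), fun φ hφ hdiv R M hR => ?_⟩
  obtain ⟨χ, hχs, hχ01, hχ1, hχ0, hχd⟩ := hcut R hR
  set δ := ENNReal.ofReal (4 * M / R)
  set B := Metric.closedBall (0 : Fin n → ℝ) (2 * R) with hB
  have hBm : MeasurableSet B := measurableSet_closedBall
  have hφm : Measurable φ := hφ.continuous.measurable
  set g : (Fin n → ℝ) → ℝ≥0∞ :=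
    B.indicator fun y => tailDensity φ δ M r y + tailDensity φ δ M s y with hg
  have hgm : Measurable g :=
    ((measurable_tailDensity hφm δ M r).add (measurable_tailDensity hφm δ M s)).indicator hBm
  obtain ⟨a, ha, hle⟩ := exists_center hgm hR
  rw [mem_closedBall_zero_iff] at ha
  have hin : ∀ x, ‖x‖ < R → fderiv ℝ χ x = 0 := by
    intro x hx
    have : χ =ᶠ[nhds x] fun _ => (1 : ℝ) := by
      filter_upwards [(isOpen_lt continuous_norm continuous_const).mem_nhds hx] with y hy
      exact hχ1 y (le_of_lt hy)
    rw [this.fderiv_eq, fderiv_const_apply]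
  have hout : ∀ x, 2 * R < ‖x‖ → fderiv ℝ χ x = 0 := by
    intro x hx
    have : χ =ᶠ[nhds x] fun _ => (0 : ℝ) := by
      filter_upwards [(isOpen_lt continuous_const continuous_norm).mem_nhds hx] with y hy
      exact hχ0 y (le_of_lt hy)
    rw [this.fderiv_eq, fderiv_const_apply]
  refine ⟨χ, solenoidalCutoff k χ φ a, hχs, hχ01, hχ1, hχ0,
    contDiff_solenoidalCutoff hχs hφ a, divg_solenoidalCutoff hk hχs hφ hdiv a,
    fun x hx => ?_, fun x hx => ?_, fun p hp => ?_⟩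
  · rw [solenoidalCutoff_eq_of_fderiv_eq_zero (hin x hx), hχ1 x hx.le, one_smul]
  · rw [solenoidalCutoff_eq_of_fderiv_eq_zero (hout x hx), hχ0 x hx.le, zero_smul]
  have hp1 : 1 < p := by rcases hp with rfl | rfl <;> assumption
  have hcp : c p ≤ c r + c s := by
    rcases hp with rfl | rfl
    · exact le_self_add
    · exact le_add_self
  have hpoint : ∀ x, ‖solenoidalCutoff k χ φ a x - χ x • φ x‖ₑ ^ p ≤
      B.indicator (fun x => c p * ∫⁻ t in Set.Ioc (0 : ℝ) 1, g (a + t • (x - a))) x := by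
    intro x
    by_cases hsh : R ≤ ‖x‖ ∧ ‖x‖ ≤ 2 * R
    · have hxB : x ∈ B := by rw [hB, mem_closedBall_zero_iff]; exact hsh.2
      have hxa : R / 2 ≤ ‖x - a‖ := by linarith [norm_sub_norm_le x a]
      rw [Set.indicator_of_mem hxB]
      calc ‖solenoidalCutoff k χ φ a x - χ x • φ x‖ₑ ^ p
          ≤ (ENNReal.ofReal (6 * C₀) * ‖radialMean k φ a x‖ₑ) ^ p :=
            ENNReal.rpow_le_rpow (enorm_solenoidalCutoff_sub_le hC₀ hR (hχd x) ha hsh.2)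
              (by linarith)
        _ = ENNReal.ofReal (6 * C₀) ^ p * ‖radialMean k φ a x‖ₑ ^ p :=
            ENNReal.mul_rpow_of_nonneg _ _ (by linarith)
        _ ≤ ENNReal.ofReal (6 * C₀) ^ p * (2 ^ (p - 1) * ∫⁻ t in Set.Ioc (0 : ℝ) 1,
              tailDensity φ δ M p (a + t • (x - a))) := by
            gcongr
            exact enorm_radialMean_rpow_le hφ.continuous hR hp1 hxa
        _ ≤ ENNReal.ofReal (6 * C₀) ^ p * (2 ^ (p - 1) * ∫⁻ t in Set.Ioc (0 : ℝ) 1,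
              g (a + t • (x - a))) := by
            gcongr 2
            refine setLIntegral_mono' measurableSet_Ioc fun t ht => ?_
            have hmem : a + t • (x - a) ∈ B := by
              have haB : a ∈ B := by rw [hB, mem_closedBall_zero_iff]; linarith
              exact (convex_closedBall (0 : Fin n → ℝ) (2 * R)).add_smul_sub_mem haB hxB
                ⟨ht.1.le, ht.2⟩
            rw [hg, Set.indicator_of_mem hmem]
            rcases hp with rfl | rfl
            · exact le_self_add
            · exact le_add_self
        _ = _ := by rw [hc, mul_assoc]
    · have hz : fderiv ℝ χ x = 0 := by
        rcases lt_or_ge ‖x‖ R with h | h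
        · exact hin x h
        · exact hout x (not_le.1 fun h' => hsh ⟨h, h'⟩)
      rw [solenoidalCutoff_eq_of_fderiv_eq_zero hz, sub_self, enorm_zero,
        ENNReal.zero_rpow_of_pos (by linarith)]
      exact zero_le
  calc ∫⁻ x, ‖solenoidalCutoff k χ φ a x - χ x • φ x‖ₑ ^ p
      ≤ ∫⁻ x, B.indicator (fun x => c p * ∫⁻ t in Set.Ioc (0 : ℝ) 1, g (a + t • (x - a))) x :=
        lintegral_mono hpoint
    _ = c p * ∫⁻ x in B, ∫⁻ t in Set.Ioc (0 : ℝ) 1, g (a + t • (x - a)) := by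
        rw [lintegral_indicator hBm, lintegral_const_mul' _ _ (hcfin p hp1)]
    _ ≤ (c r + c s) * (8 ^ n * ∫⁻ y, g y) := mul_le_mul' hcp hle
    _ = _ := by rw [hg, lintegral_indicator hBm, mul_assoc]

end Localisation

section Approximation

open scoped ENNReal
open Filter Topology

variable {n : ℕ}

lemma tendsto_lintegral_tail {h : (Fin n → ℝ) → ℝ≥0∞} (hm : AEMeasurable h)
    (hfin : ∫⁻ y, h y ≠ ∞) :
    Tendsto (fun M : ℝ => ∫⁻ y, {y : Fin n → ℝ | M ≤ ‖y‖}.indicator h y) atTop (𝓝 0) := by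
  have key := tendsto_lintegral_filter_of_dominated_convergence' (l := atTop)
    (F := fun (M : ℝ) y => {y : Fin n → ℝ | M ≤ ‖y‖}.indicator h y) (f := fun _ => 0) h
    (Eventually.of_forall fun M => hm.indicator (measurableSet_le measurable_const measurable_norm))
    (Eventually.of_forall fun M => Eventually.of_forall fun y => Set.indicator_le_self _ _ y)
    hfin (Eventually.of_forall fun y => ?_)
  · simpa using key
  · refine tendsto_const_nhds.congr' ?_
    filter_upwards [eventually_gt_atTop ‖y‖] with M hM
    simp [not_le.2 hM]

lemma tendsto_ofReal_div_rpow_mul {M p : ℝ} (hp : 1 < p) {I : ℝ≥0∞} (hI : I ≠ ∞) :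
    Tendsto (fun R : ℝ => ENNReal.ofReal (4 * M / R) ^ (p - 1) * I) atTop (𝓝 0) := by
  have h1 : Tendsto (fun R : ℝ => ENNReal.ofReal (4 * M / R)) atTop (𝓝 0) := by
    simpa using ENNReal.tendsto_ofReal (tendsto_const_nhds.div_atTop tendsto_id :
      Tendsto (fun R : ℝ => 4 * M / R) atTop (𝓝 0))
  have h2 := (ENNReal.continuous_rpow_const (y := p - 1)).tendsto 0 |>.comp h1
  rw [ENNReal.zero_rpow_of_pos (by linarith)] at h2
  simpa using ENNReal.Tendsto.mul_const h2 (Or.inr hI)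

lemma tailDensity_le_add {φ v : (Fin n → ℝ) → Fin n → ℝ} {δ : ℝ≥0∞} (hδ : δ ≤ 1) {M p : ℝ}
    (hp : 1 < p) (y : Fin n → ℝ) :
    tailDensity φ δ M p y ≤
      2 ^ (p - 1) * (tailDensity v δ M p y + 2 * ‖v y - φ y‖ₑ ^ p) := by
  have h1 : ‖φ y‖ₑ ^ p ≤ 2 ^ (p - 1) * (‖v y‖ₑ ^ p + ‖v y - φ y‖ₑ ^ p) := by
    refine le_trans (ENNReal.rpow_le_rpow ?_ (by linarith))
      (ENNReal.rpow_add_le_mul_rpow_add_rpow ‖v y‖ₑ ‖v y - φ y‖ₑ hp.le)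
    have h2 : φ y = v y - (v y - φ y) := by abel
    conv_lhs => rw [h2]
    exact enorm_sub_le
  have hδ1 : δ ^ (p - 1) ≤ 1 := by
    simpa using ENNReal.rpow_le_rpow hδ (by linarith : 0 ≤ p - 1)
  have h3 : δ ^ (p - 1) * ‖φ y‖ₑ ^ p ≤
      2 ^ (p - 1) * (δ ^ (p - 1) * ‖v y‖ₑ ^ p + ‖v y - φ y‖ₑ ^ p) := by
    calc δ ^ (p - 1) * ‖φ y‖ₑ ^ p
        ≤ δ ^ (p - 1) * (2 ^ (p - 1) * (‖v y‖ₑ ^ p + ‖v y - φ y‖ₑ ^ p)) := by gcongr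
      _ = 2 ^ (p - 1) * (δ ^ (p - 1) * ‖v y‖ₑ ^ p + δ ^ (p - 1) * ‖v y - φ y‖ₑ ^ p) := by ring
      _ ≤ _ := by
          gcongr
          exact mul_le_of_le_one_left' hδ1
  unfold tailDensity
  by_cases hy : y ∈ {y : Fin n → ℝ | M ≤ ‖y‖}
  · rw [Set.indicator_of_mem hy, Set.indicator_of_mem hy]
    calc _ ≤ 2 ^ (p - 1) * (δ ^ (p - 1) * ‖v y‖ₑ ^ p + ‖v y - φ y‖ₑ ^ p) +
          2 ^ (p - 1) * (‖v y‖ₑ ^ p + ‖v y - φ y‖ₑ ^ p) := add_le_add h3 h1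
      _ = _ := by ring
  · rw [Set.indicator_of_notMem hy, Set.indicator_of_notMem hy, add_zero, add_zero]
    refine h3.trans ?_
    gcongr
    exact le_mul_of_one_le_left' one_le_two

lemma lintegral_tailDensity_le {φ v : (Fin n → ℝ) → Fin n → ℝ} (hφ : Continuous φ)
    (hv : AEStronglyMeasurable v) {δ : ℝ≥0∞} (hδ : δ ≤ 1) {M p : ℝ}
    (hp : 1 < p) (B : Set (Fin n → ℝ)) :
    ∫⁻ y in B, tailDensity φ δ M p y ≤
      2 ^ (p - 1) * 2 * (δ ^ (p - 1) * (∫⁻ y, ‖v y‖ₑ ^ p) +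
        (∫⁻ y, {y : Fin n → ℝ | M ≤ ‖y‖}.indicator (fun y => ‖v y‖ₑ ^ p) y) +
        ∫⁻ y in B, ‖v y - φ y‖ₑ ^ p) := by
  have hvm : AEMeasurable fun y => ‖v y‖ₑ ^ p := hv.enorm.pow_const p
  have hdm : AEMeasurable fun y => ‖v y - φ y‖ₑ ^ p :=
    (hv.sub hφ.aestronglyMeasurable).enorm.pow_const p
  have htm : AEMeasurable (tailDensity v δ M p) :=
    (hvm.const_mul _).add (hvm.indicator (measurableSet_le measurable_const measurable_norm))
  have h2 : (2 : ℝ≥0∞) ^ (p - 1) ≠ ∞ := ENNReal.rpow_ne_top_of_nonneg (by linarith) (by simp)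
  calc ∫⁻ y in B, tailDensity φ δ M p y
      ≤ ∫⁻ y in B, 2 ^ (p - 1) * (tailDensity v δ M p y + 2 * ‖v y - φ y‖ₑ ^ p) :=
        lintegral_mono fun y => tailDensity_le_add hδ hp y
    _ = 2 ^ (p - 1) * ((∫⁻ y in B, tailDensity v δ M p y) + 2 * ∫⁻ y in B, ‖v y - φ y‖ₑ ^ p) := by
        rw [lintegral_const_mul' _ _ h2, lintegral_add_left' htm.restrict,
          lintegral_const_mul' _ _ (by simp)]
    _ ≤ 2 ^ (p - 1) * ((∫⁻ y, tailDensity v δ M p y) + 2 * ∫⁻ y in B, ‖v y - φ y‖ₑ ^ p) := by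
        gcongr
        exact Measure.restrict_le_self
    _ ≤ 2 ^ (p - 1) * (2 * (∫⁻ y, tailDensity v δ M p y) +
          2 * ∫⁻ y in B, ‖v y - φ y‖ₑ ^ p) := by
        gcongr
        exact le_mul_of_one_le_left' one_le_two
    _ = _ := by
        have : ∫⁻ y, tailDensity v δ M p y = δ ^ (p - 1) * (∫⁻ y, ‖v y‖ₑ ^ p) +
            ∫⁻ y, {y : Fin n → ℝ | M ≤ ‖y‖}.indicator (fun y => ‖v y‖ₑ ^ p) y := by
          unfold tailDensity
          rw [lintegral_add_left' (hvm.const_mul _), lintegral_const_mul'' _ hvm]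
        rw [this]
        ring

lemma lintegral_sub_smul_le {φ v : (Fin n → ℝ) → Fin n → ℝ} (hv : AEStronglyMeasurable v)
    {χ : (Fin n → ℝ) → ℝ} {R M p : ℝ} (hp : 1 < p) (hMR : M ≤ R)
    (hχ : ∀ x, 0 ≤ χ x ∧ χ x ≤ 1) (hχ1 : ∀ x, ‖x‖ ≤ R → χ x = 1)
    (hχ0 : ∀ x, 2 * R ≤ ‖x‖ → χ x = 0) :
    ∫⁻ x, ‖v x - χ x • φ x‖ₑ ^ p ≤
      2 ^ (p - 1) * ((∫⁻ y, {y : Fin n → ℝ | M ≤ ‖y‖}.indicator (fun y => ‖v y‖ₑ ^ p) y) +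
        ∫⁻ y in Metric.closedBall 0 (2 * R), ‖v y - φ y‖ₑ ^ p) := by
  have hp0 : 0 < p := by linarith
  have h2 : (2 : ℝ≥0∞) ^ (p - 1) ≠ ∞ := ENNReal.rpow_ne_top_of_nonneg (by linarith) (by simp)
  have hvm : AEMeasurable fun y => ‖v y‖ₑ ^ p := hv.enorm.pow_const p
  have hsm : ∀ (c : ℝ) (w : Fin n → ℝ), 0 ≤ c → c ≤ 1 → ‖c • w‖ₑ ≤ ‖w‖ₑ := by
    intro c w h0 h1
    rw [enorm_smul, Real.enorm_eq_ofReal h0]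
    exact mul_le_of_le_one_left' (ENNReal.ofReal_le_one.2 h1)
  have hpoint : ∀ x, ‖v x - χ x • φ x‖ₑ ^ p ≤ 2 ^ (p - 1) *
      ({y : Fin n → ℝ | M ≤ ‖y‖}.indicator (fun y => ‖v y‖ₑ ^ p) x +
        (Metric.closedBall 0 (2 * R)).indicator (fun y => ‖v y - φ y‖ₑ ^ p) x) := by
    intro x
    have hsplit : v x - χ x • φ x = (1 - χ x) • v x + χ x • (v x - φ x) := by
      rw [sub_smul, smul_sub, one_smul]
      abel
    rw [hsplit]
    refine (ENNReal.rpow_le_rpow (enorm_add_le _ _) hp0.le).trans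
      ((ENNReal.rpow_add_le_mul_rpow_add_rpow _ _ hp.le).trans ?_)
    gcongr
    · by_cases hx : x ∈ {y : Fin n → ℝ | M ≤ ‖y‖}
      · rw [Set.indicator_of_mem hx]
        exact ENNReal.rpow_le_rpow (hsm _ _ (by linarith [(hχ x).2]) (by linarith [(hχ x).1]))
          hp0.le
      · have hx' : ‖x‖ < M := not_le.1 hx
        simp [hχ1 x (by linarith), hp0]
    · by_cases hx : x ∈ Metric.closedBall (0 : Fin n → ℝ) (2 * R)
      · rw [Set.indicator_of_mem hx]
        exact ENNReal.rpow_le_rpow (hsm _ _ (hχ x).1 (hχ x).2) hp0.le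
      · have hx' : 2 * R < ‖x‖ := by
          rw [mem_closedBall_zero_iff] at hx
          exact not_le.1 hx
        simp [hχ0 x hx'.le, hp0]
  refine (lintegral_mono hpoint).trans (le_of_eq ?_)
  rw [lintegral_const_mul' _ _ h2, lintegral_add_left'
    (hvm.indicator (measurableSet_le measurable_const measurable_norm)),
    lintegral_indicator measurableSet_closedBall]

/-- If `v ∈ Lʳ ∩ Lˢ` is approximable in `Lˢ` by test fields of an exterior domain, then it is
approximable by such fields in both norms at the same time. -/
lemma exists_test_approx (hn : 2 ≤ n) {Ω : Set (Fin n → ℝ)}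
    (hΩext : IsCompact Ωᶜ) {r s : ℝ} (hr : 1 < r) (hrs : r < s)
    {v : (Fin n → ℝ) → Fin n → ℝ} (hv : AEStronglyMeasurable v)
    (hvr : ∫⁻ x, ‖v x‖ₑ ^ r ≠ ∞) (hvs : ∫⁻ x, ‖v x‖ₑ ^ s ≠ ∞)
    (happ : ∀ δ : ℝ≥0∞, 0 < δ → ∃ φ, IsTestIn Ω φ ∧ ∫⁻ x, ‖v x - φ x‖ₑ ^ s ≤ δ)
    {δ : ℝ≥0∞} (hδ : 0 < δ) :
    ∃ ψ, IsTestIn Ω ψ ∧ ∀ p, p = r ∨ p = s → ∫⁻ x, ‖v x - ψ x‖ₑ ^ p ≤ δ := by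
  have hs : 1 < s := hr.trans hrs
  obtain ⟨C, hC, htrunc⟩ := exists_solenoidal_truncation hn hr hs
  obtain ⟨ρ, hρ⟩ := hΩext.isBounded.subset_ball (0 : Fin n → ℝ)
  have h2 : ∀ p : ℝ, 1 < p → (2 : ℝ≥0∞) ^ (p - 1) ≠ ∞ := fun p hp =>
    ENNReal.rpow_ne_top_of_nonneg (by linarith) (by simp)
  set D : ℝ≥0∞ := 2 ^ (r - 1) + 2 ^ (s - 1) with hD
  have hDfin : D ≠ ∞ := ENNReal.add_ne_top.2 ⟨h2 r hr, h2 s hs⟩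
  set K : ℝ≥0∞ := D * (D + C * (D * 2)) * 6 with hK
  have hKfin : K ≠ ∞ := ENNReal.mul_ne_top (ENNReal.mul_ne_top hDfin (ENNReal.add_ne_top.2
    ⟨hDfin, ENNReal.mul_ne_top hC (ENNReal.mul_ne_top hDfin (by simp))⟩)) (by simp)
  obtain ⟨η, hη, hKη⟩ : ∃ η : ℝ≥0∞, 0 < η ∧ K * η ≤ δ := by
    have h := ENNReal.Tendsto.const_mul (tendsto_id (α := ℝ≥0∞) (x := 𝓝 0)) (Or.inr hKfin)
    rw [mul_zero] at h
    have h' := (h.eventually (eventually_le_nhds hδ)).filter_mono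
      (nhdsWithin_le_nhds (s := Set.Ioi 0))
    obtain ⟨η, hη, hpos⟩ := (h'.and self_mem_nhdsWithin).exists
    exact ⟨η, hpos, hη⟩
  obtain ⟨M, hMr, hMs, hM0⟩ := (((tendsto_lintegral_tail (hv.enorm.pow_const r) hvr).eventually
    (eventually_le_nhds hη)).and (((tendsto_lintegral_tail (hv.enorm.pow_const s) hvs).eventually
    (eventually_le_nhds hη)).and (eventually_gt_atTop 0))).exists
  obtain ⟨R, hRr, hRs, hR4, hRρ⟩ := (((tendsto_ofReal_div_rpow_mul (M := M) hr hvr).eventually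
    (eventually_le_nhds hη)).and (((tendsto_ofReal_div_rpow_mul (M := M) hs hvs).eventually
    (eventually_le_nhds hη)).and ((eventually_ge_atTop (4 * M)).and (eventually_ge_atTop ρ)))).exists
  have hR : 0 < R := by linarith
  have hδ1 : ENNReal.ofReal (4 * M / R) ≤ 1 := ENNReal.ofReal_le_one.2 ((div_le_one hR).2 hR4)
  set B := Metric.closedBall (0 : Fin n → ℝ) (2 * R) with hB
  have hBfin : volume B ≠ ∞ := (isCompact_closedBall _ _).measure_lt_top.ne
  obtain ⟨η', hη', hη'η, hη'B⟩ : ∃ η' : ℝ≥0∞, 0 < η' ∧ η' ≤ η ∧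
      η' ^ (r / s) * volume B ^ (1 - r / s) ≤ η := by
    have hrs1 : r / s ≤ 1 := (div_le_one (by linarith)).2 hrs.le
    have h := (ENNReal.continuous_rpow_const (y := r / s)).tendsto 0
    rw [ENNReal.zero_rpow_of_pos (div_pos (by linarith) (by linarith))] at h
    have h' := ENNReal.Tendsto.mul_const h
      (Or.inr (ENNReal.rpow_ne_top_of_nonneg (sub_nonneg.2 hrs1) hBfin))
    rw [zero_mul] at h'
    have h3 := ((eventually_le_nhds hη).and (h'.eventually (eventually_le_nhds hη))).filter_mono
      (nhdsWithin_le_nhds (s := Set.Ioi (0 : ℝ≥0∞)))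
    obtain ⟨η', ⟨ha, hb⟩, hpos⟩ := (h3.and self_mem_nhdsWithin).exists
    exact ⟨η', hpos, ha, hb⟩
  obtain ⟨φ, ⟨hφs, hφc, hφΩ, hφd⟩, hφv⟩ := happ η' hη'
  have hZs : ∫⁻ y in B, ‖v y - φ y‖ₑ ^ s ≤ η' := (setLIntegral_le_lintegral _ _).trans hφv
  have hZr : ∫⁻ y in B, ‖v y - φ y‖ₑ ^ r ≤ η := by
    have hm : AEMeasurable (fun y => ‖v y - φ y‖ₑ) (volume.restrict B) :=
      (hv.sub hφs.continuous.aestronglyMeasurable).enorm.restrict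
    refine (lintegral_rpow_le_of_le hm (by linarith) hrs.le).trans (le_trans ?_ hη'B)
    rw [Measure.restrict_apply_univ]
    gcongr
  obtain ⟨χ, ψ, hχs, hχ01, hχ1, hχ0, hψs, hψd, hψφ, hψ0, hψ⟩ := htrunc φ hφs hφd R M hR
  have hdens : ∫⁻ y in B, (tailDensity φ (ENNReal.ofReal (4 * M / R)) M r y +
      tailDensity φ (ENNReal.ofReal (4 * M / R)) M s y) ≤ D * 2 * (6 * η) := by
    rw [lintegral_add_left (measurable_tailDensity hφs.continuous.measurable _ _ _)]
    calc _ ≤ 2 ^ (r - 1) * 2 * (η + η + η) + 2 ^ (s - 1) * 2 * (η + η + η) := by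
          refine add_le_add ((lintegral_tailDensity_le hφs.continuous hv hδ1 hr B).trans ?_)
            ((lintegral_tailDensity_le hφs.continuous hv hδ1 hs B).trans ?_)
          · gcongr
          · gcongr
            exact hZs.trans hη'η
      _ = D * 2 * (3 * η) := by
          rw [hD]
          ring
      _ ≤ _ := by
          gcongr
          norm_num
  have hKsub : tsupport ψ ⊆ tsupport φ ∪ {x | R ≤ ‖x‖ ∧ ‖x‖ ≤ 2 * R} := by
    refine closure_minimal (fun x hx => ?_) ((isClosed_tsupport φ).union
      ((isClosed_le continuous_const continuous_norm).inter
        (isClosed_le continuous_norm continuous_const)))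
    by_contra hcon
    rw [Set.mem_union, not_or] at hcon
    refine hx ?_
    rcases lt_or_ge ‖x‖ R with h | h
    · rw [hψφ x h]
      exact image_eq_zero_of_notMem_tsupport hcon.1
    · exact hψ0 x (not_le.1 fun h' => hcon.2 ⟨h, h'⟩)
  refine ⟨ψ, ⟨hψs, ?_, hKsub.trans (Set.union_subset hφΩ fun x hx => ?_), hψd⟩, fun p hp => ?_⟩
  · have hc : IsCompact (tsupport φ ∪ B) :=
      IsCompact.union hφc (isCompact_closedBall (0 : Fin n → ℝ) (2 * R))
    refine hc.of_isClosed_subset (isClosed_tsupport ψ) (hKsub.trans ?_)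
    refine Set.union_subset_union_right _ fun x hx => ?_
    rw [hB, mem_closedBall_zero_iff]
    exact hx.2
  · by_contra hxΩ
    have := hρ hxΩ
    rw [mem_ball_zero_iff] at this
    linarith [hx.1]
  have hp1 : 1 < p := by rcases hp with rfl | rfl <;> assumption
  have hpD : (2 : ℝ≥0∞) ^ (p - 1) ≤ D := by
    rcases hp with rfl | rfl
    · exact le_self_add
    · exact le_add_self
  have hMp : ∫⁻ y, {y : Fin n → ℝ | M ≤ ‖y‖}.indicator (fun y => ‖v y‖ₑ ^ p) y ≤ η := by
    rcases hp with rfl | rfl <;> assumption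
  have hZp : ∫⁻ y in B, ‖v y - φ y‖ₑ ^ p ≤ η := by
    rcases hp with rfl | rfl
    · exact hZr
    · exact hZs.trans hη'η
  have hm : Measurable fun x => ‖ψ x - χ x • φ x‖ₑ ^ p :=
    (hψs.continuous.sub (hχs.continuous.smul hφs.continuous)).measurable.enorm.pow_const p
  calc ∫⁻ x, ‖v x - ψ x‖ₑ ^ p
      ≤ ∫⁻ x, 2 ^ (p - 1) * (‖ψ x - χ x • φ x‖ₑ ^ p + ‖v x - χ x • φ x‖ₑ ^ p) := by
        refine lintegral_mono fun x => ?_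
        refine le_trans (ENNReal.rpow_le_rpow ?_ (by linarith))
          (ENNReal.rpow_add_le_mul_rpow_add_rpow _ _ hp1.le)
        have : v x - ψ x = (v x - χ x • φ x) - (ψ x - χ x • φ x) := by abel
        rw [this, add_comm]
        exact enorm_sub_le
    _ = 2 ^ (p - 1) * ((∫⁻ x, ‖ψ x - χ x • φ x‖ₑ ^ p) + ∫⁻ x, ‖v x - χ x • φ x‖ₑ ^ p) := by
        rw [lintegral_const_mul' _ _ (h2 p hp1), lintegral_add_left hm]
    _ ≤ D * (C * (D * 2 * (6 * η)) + D * (η + η)) := by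
        gcongr
        · exact (hψ p hp).trans (by gcongr)
        · refine (lintegral_sub_smul_le (M := M) hv hp1 (by linarith) hχ01 hχ1 hχ0).trans ?_
          gcongr
    _ ≤ D * (C * (D * 2 * (6 * η)) + D * (6 * η)) := by
        gcongr
        rw [← two_mul]
        gcongr
        norm_num
    _ = K * η := by
        rw [hK]
        ring
    _ ≤ δ := hKη

end Approximation

section LebesgueNorm

open scoped ENNReal

variable {n : ℕ}

lemma norm_le_sqrt_sum_sq (w : Fin n → ℝ) : ‖w‖ ≤ √(∑ i, w i ^ 2) := by
  refine (pi_norm_le_iff_of_nonneg (Real.sqrt_nonneg _)).2 fun i => Real.le_sqrt_of_sq_le ?_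
  rw [Real.norm_eq_abs, sq_abs]
  exact Finset.single_le_sum (f := fun i => w i ^ 2) (fun _ _ => sq_nonneg _) (Finset.mem_univ i)

lemma sqrt_sum_sq_le (w : Fin n → ℝ) : √(∑ i, w i ^ 2) ≤ (n + 1) * ‖w‖ := by
  refine Real.sqrt_le_iff.2 ⟨by positivity, ?_⟩
  calc ∑ i, w i ^ 2 ≤ ∑ _i : Fin n, ‖w‖ ^ 2 := by
        refine Finset.sum_le_sum fun i _ => ?_
        rw [← sq_abs]
        gcongr
        exact norm_le_pi_norm w i
    _ = n * ‖w‖ ^ 2 := by simp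
    _ ≤ ((n + 1) * ‖w‖) ^ 2 := by
        rw [mul_pow]
        gcongr
        nlinarith [Nat.cast_nonneg (α := ℝ) n]

lemma enorm_rpow_le_ofReal_sqrt_rpow {t : ℝ} (ht : 0 < t) (w : Fin n → ℝ) :
    ‖w‖ₑ ^ t ≤ ENNReal.ofReal (√(∑ i, w i ^ 2) ^ t) := by
  rw [← ofReal_norm, ENNReal.ofReal_rpow_of_nonneg (norm_nonneg w) ht.le]
  exact ENNReal.ofReal_le_ofReal (Real.rpow_le_rpow (norm_nonneg w) (norm_le_sqrt_sum_sq w) ht.le)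

lemma ofReal_sqrt_rpow_le {t : ℝ} (ht : 0 < t) (w : Fin n → ℝ) :
    ENNReal.ofReal (√(∑ i, w i ^ 2) ^ t) ≤ ENNReal.ofReal ((n + 1) ^ t) * ‖w‖ₑ ^ t := by
  rw [← ofReal_norm, ENNReal.ofReal_rpow_of_nonneg (norm_nonneg w) ht.le,
    ← ENNReal.ofReal_mul (by positivity), ← Real.mul_rpow (by positivity) (norm_nonneg w)]
  exact ENNReal.ofReal_le_ofReal (Real.rpow_le_rpow (Real.sqrt_nonneg _) (sqrt_sum_sq_le w) ht.le)

variable {Ω : Set (Fin n → ℝ)} {t : ℝ} {f : (Fin n → ℝ) → Fin n → ℝ}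

lemma LtNorm_lt_of_lintegral_le (ht : 0 < t) {ε : ℝ} (hε : 0 < ε)
    (h : ∫⁻ x in Ω, ‖f x‖ₑ ^ t ≤ ENNReal.ofReal ((ε / (2 * (n + 1))) ^ t)) :
    LtNorm Ω t f < ε := by
  have hle : ∫ x in Ω, √(∑ i, f x i ^ 2) ^ t ≤ (ε / 2) ^ t := by
    refine (Real.le_norm_self _).trans ((norm_integral_le_lintegral_norm _).trans
      (ENNReal.toReal_le_of_le_ofReal (by positivity) ?_))
    calc ∫⁻ x in Ω, ENNReal.ofReal ‖√(∑ i, f x i ^ 2) ^ t‖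
        ≤ ∫⁻ x in Ω, ENNReal.ofReal ((n + 1) ^ t) * ‖f x‖ₑ ^ t := by
          refine lintegral_mono fun x => ?_
          rw [Real.norm_of_nonneg (by positivity)]
          exact ofReal_sqrt_rpow_le ht (f x)
      _ = ENNReal.ofReal ((n + 1) ^ t) * ∫⁻ x in Ω, ‖f x‖ₑ ^ t :=
          lintegral_const_mul' _ _ ENNReal.ofReal_ne_top
      _ ≤ ENNReal.ofReal ((n + 1) ^ t) * ENNReal.ofReal ((ε / (2 * (n + 1))) ^ t) := by gcongr
      _ = ENNReal.ofReal ((ε / 2) ^ t) := by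
          rw [← ENNReal.ofReal_mul (by positivity), ← Real.mul_rpow (by positivity) (by positivity)]
          congr 2
          field_simp
  calc LtNorm Ω t f ≤ ((ε / 2) ^ t) ^ (1 / t) :=
        Real.rpow_le_rpow (integral_nonneg fun x => by positivity) hle (by positivity)
    _ = ε / 2 := by rw [← Real.rpow_mul (by positivity), mul_one_div_cancel ht.ne', Real.rpow_one]
    _ < ε := half_lt_self hε

lemma lintegral_le_of_LtNorm_lt (ht : 0 < t) {ε : ℝ}
    (hf : AEStronglyMeasurable f (volume.restrict Ω)) (hfin : ∫⁻ x in Ω, ‖f x‖ₑ ^ t ≠ ∞)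
    (h : LtNorm Ω t f < ε) : ∫⁻ x in Ω, ‖f x‖ₑ ^ t ≤ ENNReal.ofReal (ε ^ t) := by
  have hcont : Continuous fun w : Fin n → ℝ => √(∑ i, w i ^ 2) ^ t :=
    (by fun_prop : Continuous fun w : Fin n → ℝ => √(∑ i, w i ^ 2)).rpow_const
      fun _ => Or.inr ht.le
  have hint : Integrable (fun x => √(∑ i, f x i ^ 2) ^ t) (volume.restrict Ω) := by
    refine ⟨hcont.comp_aestronglyMeasurable hf, ?_⟩
    rw [hasFiniteIntegral_iff_ofReal (Filter.Eventually.of_forall fun x => by positivity)]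
    refine (lintegral_mono fun x => ofReal_sqrt_rpow_le ht (f x)).trans_lt ?_
    rw [lintegral_const_mul' _ _ ENNReal.ofReal_ne_top]
    exact ENNReal.mul_lt_top ENNReal.ofReal_lt_top hfin.lt_top
  have hI : 0 ≤ ∫ x in Ω, √(∑ i, f x i ^ 2) ^ t := integral_nonneg fun x => by positivity
  refine (lintegral_mono fun x => enorm_rpow_le_ofReal_sqrt_rpow ht (f x)).trans ?_
  rw [← ofReal_integral_eq_lintegral_ofReal hint
    (Filter.Eventually.of_forall fun x => by positivity)]
  refine ENNReal.ofReal_le_ofReal ?_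
  have h' := Real.rpow_le_rpow (Real.rpow_nonneg hI _) h.le ht.le
  rwa [← Real.rpow_mul hI, one_div_mul_cancel ht.ne', Real.rpow_one] at h'

lemma LtNorm_eq_zero_of_not_integrable (ht : 0 < t)
    (h : ¬ Integrable (fun x => √(∑ i, f x i ^ 2) ^ t) (volume.restrict Ω)) :
    LtNorm Ω t f = 0 := by
  rw [LtNorm, integral_undef h, Real.zero_rpow (by positivity)]

lemma LtNorm_eq_zero_of_lintegral_eq_top (ht : 0 < t) (h : ∫⁻ x in Ω, ‖f x‖ₑ ^ t = ∞) :
    LtNorm Ω t f = 0 := by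
  refine LtNorm_eq_zero_of_not_integrable ht fun hint => ?_
  have hfin := hint.hasFiniteIntegral
  rw [hasFiniteIntegral_iff_ofReal (Filter.Eventually.of_forall fun x => by positivity)] at hfin
  exact (h ▸ (lintegral_mono fun x => enorm_rpow_le_ofReal_sqrt_rpow ht (f x)).trans_lt hfin).false

lemma LtNorm_eq_zero_of_not_aemeasurable (ht : 0 < t)
    (h : ¬ AEMeasurable (fun x => ∑ i, f x i ^ 2) (volume.restrict Ω)) : LtNorm Ω t f = 0 := by
  refine LtNorm_eq_zero_of_not_integrable ht fun hint => h ?_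
  refine (hint.aemeasurable.pow_const (2 / t)).congr (Filter.Eventually.of_forall fun x => ?_)
  have h0 : 0 ≤ ∑ i, f x i ^ 2 := Finset.sum_nonneg fun i _ => sq_nonneg _
  dsimp only
  rw [← Real.rpow_mul (Real.sqrt_nonneg _), mul_div_cancel₀ _ ht.ne', Real.rpow_two,
    Real.sq_sqrt h0]

lemma lintegral_sub_eq_top {φ : (Fin n → ℝ) → Fin n → ℝ} (hφ : Continuous φ)
    (hφc : HasCompactSupport φ) (ht : 1 < t)
    (h : ∫⁻ x in Ω, ‖f x‖ₑ ^ t = ∞) : ∫⁻ x in Ω, ‖f x - φ x‖ₑ ^ t = ∞ := by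
  by_contra hcon
  have hφt : ∫⁻ x in Ω, ‖φ x‖ₑ ^ t ≠ ∞ := by
    have hmem : MemLp φ (ENNReal.ofReal t) (volume.restrict Ω) :=
      (hφ.memLp_of_hasCompactSupport hφc).restrict Ω
    have := lintegral_rpow_enorm_lt_top_of_eLpNorm_lt_top (by simp; linarith)
      ENNReal.ofReal_ne_top hmem.2
    rw [ENNReal.toReal_ofReal (by linarith)] at this
    exact this.ne
  have h2 : (2 : ℝ≥0∞) ^ (t - 1) ≠ ∞ := ENNReal.rpow_ne_top_of_nonneg (by linarith) (by simp)
  have hle : ∫⁻ x in Ω, ‖f x‖ₑ ^ t ≤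
      2 ^ (t - 1) * ((∫⁻ x in Ω, ‖f x - φ x‖ₑ ^ t) + ∫⁻ x in Ω, ‖φ x‖ₑ ^ t) := by
    rw [← lintegral_add_right _ (hφ.measurable.enorm.pow_const t), ← lintegral_const_mul' _ _ h2]
    refine lintegral_mono fun x => le_trans (ENNReal.rpow_le_rpow ?_ (by linarith))
      (ENNReal.rpow_add_le_mul_rpow_add_rpow _ _ ht.le)
    conv_lhs => rw [← sub_add_cancel (f x) (φ x)]
    exact enorm_add_le _ _
  exact (ENNReal.mul_ne_top h2 (ENNReal.add_ne_top.2 ⟨hcon, hφt⟩)) (top_le_iff.1 (h ▸ hle))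

end LebesgueNorm

section Measurability

variable {n : ℕ} {Ω : Set (Fin n → ℝ)}

/-- Every constant vector is attained on a small ball by a test field. -/
lemma exists_isTestIn_eq_const (hn : 2 ≤ n) {x₀ : Fin n → ℝ} {ρ : ℝ} (hρ : 0 < ρ)
    (hΩ : Metric.closedBall x₀ (2 * ρ) ⊆ Ω) (e : Fin n → ℝ) :
    ∃ ψ, IsTestIn Ω ψ ∧ ∀ x ∈ Metric.ball x₀ ρ, ψ x = e := by
  obtain ⟨k, hk⟩ : ∃ k, n = k + 2 := ⟨n - 2, by omega⟩
  let χ : ContDiffBump x₀ := ⟨ρ, 2 * ρ, hρ, by linarith⟩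
  have hχs : ContDiff ℝ (⊤ : ℕ∞) χ := χ.contDiff
  have hout : ∀ x, x ∉ Metric.closedBall x₀ (2 * ρ) →
      solenoidalCutoff k χ (fun _ => e) x₀ x = 0 := by
    intro x hx
    have hev : (χ : (Fin n → ℝ) → ℝ) =ᶠ[nhds x] fun _ => 0 := by
      filter_upwards [Metric.isClosed_closedBall.isOpen_compl.mem_nhds hx] with y hy
      exact χ.zero_of_le_dist (not_le.1 fun h => hy (Metric.mem_closedBall.2 h)).le
    rw [solenoidalCutoff_eq_of_fderiv_eq_zero (by rw [hev.fderiv_eq, fderiv_const_apply]),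
      hev.self_of_nhds, zero_smul]
  have hsupp : tsupport (solenoidalCutoff k χ (fun _ => e) x₀) ⊆ Metric.closedBall x₀ (2 * ρ) :=
    closure_minimal (fun x hx => by_contra fun h => hx (hout x h)) Metric.isClosed_closedBall
  refine ⟨solenoidalCutoff k χ (fun _ => e) x₀, ⟨contDiff_solenoidalCutoff hχs contDiff_const x₀,
    (isCompact_closedBall x₀ (2 * ρ)).of_isClosed_subset (isClosed_tsupport _) hsupp,
    hsupp.trans hΩ, divg_solenoidalCutoff hk hχs contDiff_const ?_ x₀⟩, fun x hx => ?_⟩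
  · intro x
    simp [divg, Dmat]
  · have hev : (χ : (Fin n → ℝ) → ℝ) =ᶠ[nhds x] fun _ => 1 := by
      filter_upwards [Metric.isOpen_ball.mem_nhds hx] with y hy
      exact χ.one_of_mem_closedBall (Metric.ball_subset_closedBall hy)
    rw [solenoidalCutoff_eq_of_fderiv_eq_zero (by rw [hev.fderiv_eq, fderiv_const_apply]),
      hev.self_of_nhds, one_smul]

lemma aestronglyMeasurable_of_forall_isTestIn (hn : 2 ≤ n) (hΩo : IsOpen Ω)
    {v : (Fin n → ℝ) → Fin n → ℝ} (h : ∀ φ, IsTestIn Ω φ →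
      AEMeasurable (fun x => ∑ i, (v x i - φ x i) ^ 2) (volume.restrict Ω)) :
    AEStronglyMeasurable v (volume.restrict Ω) := by
  have h0 : AEMeasurable (fun x => ∑ i, v x i ^ 2) (volume.restrict Ω) := by
    simpa using h 0 ⟨contDiff_const, HasCompactSupport.zero, by simp [tsupport],
      fun x => by simp [divg, Dmat]⟩
  have hball : ∀ x ∈ Ω, ∃ ρ > 0, Metric.closedBall x (2 * ρ) ⊆ Ω := by
    intro x hx
    obtain ⟨ρ, hρ, hsub⟩ := Metric.nhds_basis_closedBall.mem_iff.1 (hΩo.mem_nhds hx)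
    exact ⟨ρ / 2, half_pos hρ, by rwa [mul_div_cancel₀ _ two_ne_zero]⟩
  choose! ρ hρ hsub using hball
  obtain ⟨T, hTΩ, hTc, hcover⟩ := TopologicalSpace.countable_cover_nhdsWithin
    (f := fun x => Metric.ball x (ρ x)) fun x hx =>
      mem_nhdsWithin_of_mem_nhds (Metric.ball_mem_nhds x (hρ x hx))
  refine (aemeasurable_pi_iff.2 fun i => ?_).aestronglyMeasurable
  refine AEMeasurable.mono_measure ?_ (Measure.restrict_mono hcover le_rfl)
  have : Countable T := hTc.to_subtype
  rw [Set.biUnion_eq_iUnion]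
  refine aemeasurable_iUnion_iff.2 fun ⟨x, hx⟩ => ?_
  obtain ⟨ψ, hψ, hψe⟩ := exists_isTestIn_eq_const hn (hρ x (hTΩ hx)) (hsub x (hTΩ hx))
    (Pi.single i 1)
  have hbΩ : Metric.ball x (ρ x) ⊆ Ω := fun y hy => hsub x (hTΩ hx) <| by
    rw [Metric.mem_ball] at hy
    rw [Metric.mem_closedBall]
    linarith [hρ x (hTΩ hx)]
  have hm : AEMeasurable (fun y => ((∑ j, v y j ^ 2) - (∑ j, (v y j - ψ y j) ^ 2) + 1) / 2)
      (volume.restrict (Metric.ball x (ρ x))) :=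
    (((h0.sub (h ψ hψ)).add_const 1).div_const 2).mono_measure (Measure.restrict_mono hbΩ le_rfl)
  refine hm.congr ((ae_restrict_iff' measurableSet_ball).2 (Filter.Eventually.of_forall ?_))
  intro y hy
  have hsum : ∑ j, (v y j - (Pi.single i 1 : Fin n → ℝ) j) ^ 2 =
      (∑ j, v y j ^ 2) - 2 * v y i + 1 := by
    simp only [sub_sq, Finset.sum_add_distrib, Finset.sum_sub_distrib]
    simp [Pi.single_apply, ite_pow]
  dsimp only
  rw [hψe y hy, hsum]
  ring

end Measurability

/-- Density of `𝒞₀(Ω)` in `J^r(Ω) ∩ J^s(Ω)` for an exterior domain `Ω ⊆ ℝⁿ`, `n ≥ 3`,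
`1 < r < s < ∞`: any `v` approximable in `L^r` by test fields and approximable in `L^s`
by test fields is simultaneously approximable in both norms by a single test field. -/
theorem stmt7 (n : ℕ) (hn : 3 ≤ n) (Ω : Set (Fin n → ℝ)) (hΩo : IsOpen Ω)
    (hΩext : IsCompact Ωᶜ) (hΩconn : IsConnected Ω)
    (r s : ℝ) (hr : 1 < r) (hrs : r < s)
    (v : (Fin n → ℝ) → Fin n → ℝ)
    (hvr : ∀ ε : ℝ, 0 < ε → ∃ φ, IsTestIn Ω φ ∧ LtNorm Ω r (fun x i => v x i - φ x i) < ε)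
    (hvs : ∀ ε : ℝ, 0 < ε → ∃ φ, IsTestIn Ω φ ∧ LtNorm Ω s (fun x i => v x i - φ x i) < ε) :
    ∀ ε : ℝ, 0 < ε → ∃ φ, IsTestIn Ω φ ∧
      LtNorm Ω r (fun x i => v x i - φ x i) < ε ∧
      LtNorm Ω s (fun x i => v x i - φ x i) < ε := by
  intro ε hε
  have hs : 1 < s := hr.trans hrs
  have hr0 : 0 < r := by linarith
  have hs0 : 0 < s := by linarith
  by_cases hv : AEStronglyMeasurable v (volume.restrict Ω)
  swap
  · obtain ⟨φ, hφ, hnm⟩ : ∃ φ, IsTestIn Ω φ ∧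
        ¬ AEMeasurable (fun x => ∑ i, (v x i - φ x i) ^ 2) (volume.restrict Ω) := by
      by_contra! hcon
      exact hv (aestronglyMeasurable_of_forall_isTestIn (by omega) hΩo hcon)
    refine ⟨φ, hφ, ?_, ?_⟩
    · rwa [LtNorm_eq_zero_of_not_aemeasurable hr0 hnm]
    · rwa [LtNorm_eq_zero_of_not_aemeasurable hs0 hnm]
  by_cases hfr : ∫⁻ x in Ω, ‖v x‖ₑ ^ r = ⊤
  · obtain ⟨φ, hφ, hlt⟩ := hvs ε hε
    refine ⟨φ, hφ, ?_, hlt⟩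
    exact (LtNorm_eq_zero_of_lintegral_eq_top hr0
      (lintegral_sub_eq_top hφ.1.continuous hφ.2.1 hr hfr)).trans_lt hε
  by_cases hfs : ∫⁻ x in Ω, ‖v x‖ₑ ^ s = ⊤
  · obtain ⟨φ, hφ, hlt⟩ := hvr ε hε
    refine ⟨φ, hφ, hlt, ?_⟩
    exact (LtNorm_eq_zero_of_lintegral_eq_top hs0
      (lintegral_sub_eq_top hφ.1.continuous hφ.2.1 hs hfs)).trans_lt hε
  have hΩm : MeasurableSet Ω := hΩo.measurableSet
  have hind : ∀ (φ : (Fin n → ℝ) → Fin n → ℝ) (t : ℝ), tsupport φ ⊆ Ω → 0 < t →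
      ∫⁻ x, ‖Ω.indicator v x - φ x‖ₑ ^ t = ∫⁻ x in Ω, ‖v x - φ x‖ₑ ^ t := by
    intro φ t hφ ht
    rw [← lintegral_indicator hΩm]
    refine lintegral_congr fun x => ?_
    by_cases hx : x ∈ Ω
    · rw [Set.indicator_of_mem hx, Set.indicator_of_mem hx]
    · rw [Set.indicator_of_notMem hx, Set.indicator_of_notMem hx,
        image_eq_zero_of_notMem_tsupport fun h => hx (hφ h), sub_zero, enorm_zero,
        ENNReal.zero_rpow_of_pos ht]
  have hind0 : ∀ t : ℝ, 0 < t → ∫⁻ x, ‖Ω.indicator v x‖ₑ ^ t = ∫⁻ x in Ω, ‖v x‖ₑ ^ t := by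
    intro t ht
    simpa using hind 0 t (by simp [tsupport]) ht
  have happ : ∀ δ : ENNReal, 0 < δ →
      ∃ φ, IsTestIn Ω φ ∧ ∫⁻ x, ‖Ω.indicator v x - φ x‖ₑ ^ s ≤ δ := by
    intro δ hδ
    obtain ⟨ε', hε', hle⟩ : ∃ ε' : ℝ, 0 < ε' ∧ ENNReal.ofReal (ε' ^ s) ≤ δ := by
      rcases eq_or_ne δ ⊤ with rfl | hδt
      · exact ⟨1, one_pos, le_top⟩
      · refine ⟨δ.toReal ^ (1 / s), Real.rpow_pos_of_pos (ENNReal.toReal_pos hδ.ne' hδt) _, ?_⟩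
        rw [← Real.rpow_mul ENNReal.toReal_nonneg, one_div_mul_cancel hs0.ne', Real.rpow_one,
          ENNReal.ofReal_toReal hδt]
    obtain ⟨φ, hφ, hlt⟩ := hvs ε' hε'
    refine ⟨φ, hφ, ?_⟩
    rw [hind φ s hφ.2.2.1 hs0]
    refine (lintegral_le_of_LtNorm_lt hs0 (hv.sub hφ.1.continuous.aestronglyMeasurable) ?_
      hlt).trans hle
    intro htop
    have hneg := lintegral_sub_eq_top (φ := -φ) hφ.1.continuous.neg hφ.2.1.neg hs htop
    simp only [Pi.neg_apply, sub_neg_eq_add, Pi.sub_apply, sub_add_cancel] at hneg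
    exact hfs hneg
  have hc : 0 < ε / (2 * (n + 1)) := by positivity
  obtain ⟨ψ, hψ, hle⟩ := exists_test_approx (by omega) hΩext hr hrs
    ((aestronglyMeasurable_indicator_iff hΩm).2 hv) (by rwa [hind0 r hr0]) (by rwa [hind0 s hs0])
    happ (δ := min (ENNReal.ofReal ((ε / (2 * (n + 1))) ^ r))
      (ENNReal.ofReal ((ε / (2 * (n + 1))) ^ s)))
    (lt_min (ENNReal.ofReal_pos.2 (by positivity)) (ENNReal.ofReal_pos.2 (by positivity)))
  refine ⟨ψ, hψ, LtNorm_lt_of_lintegral_le hr0 hε ?_, LtNorm_lt_of_lintegral_le hs0 hε ?_⟩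
  · exact (hind ψ r hψ.2.2.1 hr0).symm.trans_le ((hle r (Or.inl rfl)).trans (min_le_left _ _))
  · exact (hind ψ s hψ.2.2.1 hs0).symm.trans_le ((hle s (Or.inr rfl)).trans (min_le_right _ _))
end

section
/- Let Ω ⊂ ℝⁿ be a bounded convex C² domain, μ > 0, p ∈ (3/2, 2], and v ∈ W^{2,2}(Ω) ∩ W₀^{1,2}(Ω). Then ∫_Ω (μ+|∇v|²)^{p−2} |∇∇v|² dx ≤ (1/(2p−3))² ∫_Ω (μ+|∇v|²)^{p−2} |Δv|² dx. -/
open scoped BigOperators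
open MeasureTheory

noncomputable def frobSq {n : ℕ} (A : Matrix (Fin n) (Fin n) ℝ) : ℝ :=
  ∑ i, ∑ j, (A i j) ^ 2

/-- Second derivatives `∂_k ∂_j v_i` of a vector field. -/
noncomputable def D3 {n : ℕ} (v : (Fin n → ℝ) → Fin n → ℝ) (x : Fin n → ℝ)
    (i j k : Fin n) : ℝ :=
  fderiv ℝ (fun y => Dmat v y i j) x (Pi.single k 1)

section Bochner

open Filter Topology Set
open scoped NNReal

/-- The product of a compactly supported Lipschitz function and a `C¹` function is Lipschitz. -/
lemma exists_lipschitzWith_mul {E : Type*} [NormedAddCommGroup E] [NormedSpace ℝ E]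
    [FiniteDimensional ℝ E] {C : ℝ≥0} {χ f : E → ℝ} (hχ : LipschitzWith C χ)
    (hχc : HasCompactSupport χ) (hf : ContDiff ℝ 1 f) :
    ∃ D, LipschitzWith D (fun x => χ x * f x) := by
  obtain ⟨R, hR0, hR⟩ := hχc.isCompact.isBounded.subset_ball_lt 0 (0 : E)
  let η : ContDiffBump (0 : E) := ⟨R, R + 1, hR0, by linarith⟩
  have hηf : ContDiff ℝ 1 (fun y => η y * f y) := η.contDiff.mul hf
  have hηc : HasCompactSupport (fun y => η y * f y) := η.hasCompactSupport.mul_right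
  obtain ⟨D, hD⟩ := hηf.lipschitzWith_of_hasCompactSupport hηc one_ne_zero
  obtain ⟨A, hA⟩ := hχc.exists_bound_of_continuous hχ.continuous
  obtain ⟨B, hB⟩ := hηc.exists_bound_of_continuous hηf.continuous
  have hA0 : 0 ≤ A := (norm_nonneg _).trans (hA 0)
  have hB0 : 0 ≤ B := (norm_nonneg _).trans (hB 0)
  have heq : (fun x => χ x * f x) = fun x => χ x * (η x * f x) := by
    ext x
    by_cases hx : x ∈ tsupport χ
    · rw [η.one_of_mem_closedBall (Metric.ball_subset_closedBall (hR hx)), one_mul]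
    · simp [image_eq_zero_of_notMem_tsupport hx]
  rw [heq]
  refine ⟨⟨A * D + B * C, by positivity⟩, LipschitzWith.of_dist_le_mul fun x y => ?_⟩
  have h1 := hχ.dist_le_mul x y
  have h2 := hD.dist_le_mul x y
  rw [Real.dist_eq] at h1 h2 ⊢
  have e : χ x * (η x * f x) - χ y * (η y * f y)
    = χ x * (η x * f x - η y * f y) + (η y * f y) * (χ x - χ y) := by ring
  rw [e]
  refine (abs_add_le _ _).trans ?_
  rw [abs_mul, abs_mul]
  have h3 := hA x
  have h4 := hB y
  rw [Real.norm_eq_abs] at h3 h4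
  have h5 : |χ x| * |η x * f x - η y * f y| ≤ A * (D * dist x y) :=
    mul_le_mul h3 h2 (abs_nonneg _) hA0
  have h6 : |η y * f y| * |χ x - χ y| ≤ B * (C * dist x y) :=
    mul_le_mul h4 h1 (abs_nonneg _) hB0
  calc _ ≤ _ := add_le_add h5 h6
    _ = _ := by change _ = (A * D + B * C) * dist x y; ring

section IntegrationByParts

variable {E : Type*} [NormedAddCommGroup E] [NormedSpace ℝ E] [FiniteDimensional ℝ E]
  [MeasurableSpace E] [BorelSpace E] {ν : Measure E} [ν.IsAddHaarMeasure]

/-- Commutation of weak derivatives, for a compactly supported `C¹` function `g`. -/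
lemma integral_fderiv_mul_comm_of_hasCompactSupport {C : ℝ≥0} {h g : E → ℝ}
    (hh : LipschitzWith C h) (hhc : HasCompactSupport h) (hg : ContDiff ℝ 1 g)
    (hgc : HasCompactSupport g) (a b : E) :
    ∫ x, lineDeriv ℝ h x a * fderiv ℝ g x b ∂ν = ∫ x, lineDeriv ℝ h x b * fderiv ℝ g x a ∂ν := by
  obtain ⟨D, hD⟩ := hg.lipschitzWith_of_hasCompactSupport hgc one_ne_zero
  have hgd : Differentiable ℝ g := hg.differentiable one_ne_zero
  have hcont : ∀ c, Continuous fun x => fderiv ℝ g x c := fun c =>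
    (hg.continuous_fderiv one_ne_zero).clm_apply continuous_const
  have hint : Integrable (fun x => lineDeriv ℝ h x a) ν := by
    refine (integrableOn_iff_integrable_of_support_subset (s := tsupport h) ?_).1
      ((hh.locallyIntegrable_lineDeriv a).integrableOn_isCompact hhc)
    intro x hx
    by_contra hxs
    have : h =ᶠ[𝓝 x] fun _ => 0 := notMem_tsupport_iff_eventuallyEq.1 hxs
    refine hx (?_ : lineDeriv ℝ h x a = 0)
    rw [this.lineDeriv_eq]; simp [lineDeriv]
  have A := hD.integral_inv_smul_sub_mul_tendsto_integral_lineDeriv_mul (μ := ν) hint b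
  have B := hh.integral_inv_smul_sub_mul_tendsto_integral_lineDeriv_mul' (μ := ν) hhc (hcont a) (-b)
  have key : ∀ t : ℝ, ∫ x, (t⁻¹ • (g (x + t • b) - g x)) * lineDeriv ℝ h x a ∂ν
      = - ∫ x, (t⁻¹ • (h (x + t • -b) - h x)) * fderiv ℝ g x a ∂ν := by
    intro t
    have hL : LipschitzWith (‖t⁻¹‖₊ * (D + D)) (fun x => t⁻¹ • (g (x + t • b) - g x)) := by
      have h1 : LipschitzWith D (fun x => g (x + t • b)) := by
        have := hD.comp ((LipschitzWith.id).add (LipschitzWith.const (t • b)))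
        rw [add_zero, mul_one] at this
        exact this
      exact (lipschitzWith_smul t⁻¹).comp (h1.sub hD)
    have hI := hL.integral_lineDeriv_mul_eq (μ := ν) hh hhc (-a)
    rw [neg_neg] at hI
    have hder : ∀ x, lineDeriv ℝ (fun x => t⁻¹ • (g (x + t • b) - g x)) x (-a)
        = - (t⁻¹ * (fderiv ℝ g (x + t • b) a - fderiv ℝ g x a)) := by
      intro x
      have hd : DifferentiableAt ℝ (fun x => g (x + t • b)) x :=
        (hgd _).comp x (differentiableAt_id.add_const _)
      rw [DifferentiableAt.lineDeriv_eq_fderiv (by fun_prop), fderiv_fun_const_smul (by fun_prop),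
        fderiv_fun_sub hd (hgd x), fderiv_comp_add_right]
      simp
      ring
    have hint2 : Integrable (fun x => fderiv ℝ g x a * h (x + t • -b)) ν :=
      ((hcont a).mul (hh.continuous.comp (by fun_prop))).integrable_of_hasCompactSupport
        ((hgc.fderiv_apply ℝ a).mul_right)
    have hint3 : Integrable (fun x => fderiv ℝ g x a * h x) ν :=
      ((hcont a).mul hh.continuous).integrable_of_hasCompactSupport
        ((hgc.fderiv_apply ℝ a).mul_right)
    have hint4 : Integrable (fun x => fderiv ℝ g (x + t • b) a * h x) ν :=
      (((hcont a).comp (by fun_prop : Continuous fun x => x + t • b)).mul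
        hh.continuous).integrable_of_hasCompactSupport hhc.mul_left
    have hsh : ∫ x, fderiv ℝ g (x + t • b) a * h x ∂ν = ∫ x, fderiv ℝ g x a * h (x + t • -b) ∂ν := by
      rw [← integral_add_right_eq_self (fun x => fderiv ℝ g x a * h (x + t • -b)) (t • b)]
      simp [add_assoc]
    calc ∫ x, (t⁻¹ • (g (x + t • b) - g x)) * lineDeriv ℝ h x a ∂ν
        = ∫ x, - (t⁻¹ * (fderiv ℝ g (x + t • b) a - fderiv ℝ g x a)) * h x ∂ν := by
          simp_rw [hder] at hI
          rw [hI]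
          simp_rw [mul_comm]
      _ = -(t⁻¹ * (∫ x, fderiv ℝ g (x + t • b) a * h x ∂ν - ∫ x, fderiv ℝ g x a * h x ∂ν)) := by
          rw [← integral_sub hint4 hint3, ← integral_const_mul, ← integral_neg]
          congr 1; ext x; ring
      _ = -(t⁻¹ * (∫ x, fderiv ℝ g x a * h (x + t • -b) ∂ν - ∫ x, fderiv ℝ g x a * h x ∂ν)) := by
          rw [hsh]
      _ = _ := by
          rw [← integral_sub hint2 hint3, ← integral_const_mul]
          congr 2; ext x; simp; ring
  simp_rw [key] at A
  have hlim := tendsto_nhds_unique A B.neg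
  simp_rw [(hgd _).lineDeriv_eq_fderiv, lineDeriv_neg] at hlim
  simp_rw [mul_comm (lineDeriv ℝ h _ a)]
  rw [hlim, ← integral_neg]
  simp

/-- Commutation of weak derivatives: `∫ ∂ₐh ∂_b g = ∫ ∂_b h ∂ₐg` for `h` Lipschitz with compact
support and `g` of class `C¹`. -/
lemma integral_fderiv_mul_comm {C : ℝ≥0} {h g : E → ℝ}
    (hh : LipschitzWith C h) (hhc : HasCompactSupport h) (hg : ContDiff ℝ 1 g) (a b : E) :
    ∫ x, lineDeriv ℝ h x a * fderiv ℝ g x b ∂ν = ∫ x, lineDeriv ℝ h x b * fderiv ℝ g x a ∂ν := by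
  obtain ⟨R, hR0, hR⟩ := hhc.isCompact.isBounded.subset_ball_lt 0 (0 : E)
  let η : ContDiffBump (0 : E) := ⟨R, R + 1, hR0, by linarith⟩
  have hη : ∀ x c, lineDeriv ℝ h x c * fderiv ℝ (fun y => η y * g y) x b
      = lineDeriv ℝ h x c * fderiv ℝ g x b ∧
      lineDeriv ℝ h x c * fderiv ℝ (fun y => η y * g y) x a
      = lineDeriv ℝ h x c * fderiv ℝ g x a := by
    intro x c
    by_cases hx : x ∈ tsupport h
    · have : (fun y => η y * g y) =ᶠ[𝓝 x] g := by
        filter_upwards [Metric.isOpen_ball.mem_nhds (hR hx)] with y hy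
        rw [η.one_of_mem_closedBall (Metric.ball_subset_closedBall hy), one_mul]
      rw [this.fderiv_eq]; simp
    · have : h =ᶠ[𝓝 x] fun _ => 0 := notMem_tsupport_iff_eventuallyEq.1 hx
      have h0 : lineDeriv ℝ h x c = 0 := by rw [this.lineDeriv_eq]; simp [lineDeriv]
      simp [h0]
  have := integral_fderiv_mul_comm_of_hasCompactSupport (ν := ν) hh hhc
    (η.contDiff.mul hg) η.hasCompactSupport.mul_right a b
  simpa only [fun x c => (hη x c).1, fun x c => (hη x c).2] using this

/-- The null Lagrangian `∂ₐf ∂_b g - ∂_b f ∂ₐg`, tested against a Lipschitz function `χ`. -/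
lemma integral_jacobian_mul_lipschitz {C : ℝ≥0} {χ f g : E → ℝ} (hχ : LipschitzWith C χ)
    (hχc : HasCompactSupport χ) (hf : ContDiff ℝ 1 f) (hg : ContDiff ℝ 1 g) (a b : E) :
    ∫ x, (χ x * fderiv ℝ f x a + fderiv ℝ χ x a * f x) * fderiv ℝ g x b ∂ν
      = ∫ x, (χ x * fderiv ℝ f x b + fderiv ℝ χ x b * f x) * fderiv ℝ g x a ∂ν := by
  obtain ⟨D, hD⟩ := exists_lipschitzWith_mul hχ hχc hf
  have key : ∀ c, ∀ᵐ x ∂ν, lineDeriv ℝ (fun x => χ x * f x) x c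
      = χ x * fderiv ℝ f x c + fderiv ℝ χ x c * f x := by
    intro c
    filter_upwards [hχ.ae_differentiableAt (μ := ν)] with x hx
    have hfx := hf.differentiable one_ne_zero x
    rw [(hx.fun_mul hfx).lineDeriv_eq_fderiv, fderiv_fun_mul hx hfx]
    simp [mul_comm]
  calc _ = ∫ x, lineDeriv ℝ (fun x => χ x * f x) x a * fderiv ℝ g x b ∂ν :=
        integral_congr_ae (by filter_upwards [key a] with x hx; rw [hx])
    _ = ∫ x, lineDeriv ℝ (fun x => χ x * f x) x b * fderiv ℝ g x a ∂ν :=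
        integral_fderiv_mul_comm hD hχc.mul_right hg a b
    _ = _ := integral_congr_ae (by filter_upwards [key b] with x hx; rw [hx])

end IntegrationByParts

section Boundary

variable {E : Type*} [NormedAddCommGroup E] [NormedSpace ℝ E] {Ω : Set E} {y x₀ τ : E}
  {L : E →L[ℝ] ℝ}

/-- Near a boundary point `y`, a tangent line to a convex open set stays at linear distance from the
boundary, measured in an inward direction. -/
lemma Convex.exists_frontier_near_tangent (hΩo : IsOpen Ω) (hΩc : Convex ℝ Ω)
    (hy : y ∈ frontier Ω) (hx₀ : x₀ ∈ Ω) (hL : ∀ z ∈ Ω, L z < L y) (hτ : L τ = 0) :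
    ∃ K > 0, ∀ s : ℝ, K * |s| ≤ 1 →
      ∃ t, 0 ≤ t ∧ t ≤ K * |s| ∧ y + s • τ + t • (x₀ - y) ∈ frontier Ω := by
  obtain ⟨r, hr, hball⟩ := Metric.isOpen_iff.1 hΩo x₀ hx₀
  refine ⟨(‖τ‖ + 1) / r, by positivity, fun s hs => ?_⟩
  rcases eq_or_ne s 0 with rfl | hs0
  · exact ⟨0, le_rfl, by simp, by simpa using hy⟩
  set T := (‖τ‖ + 1) / r * |s| with hT
  have hTpos : 0 < T := by positivity
  have hout : y + s • τ ∉ Ω := fun h => by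
    have := hL _ h
    simp [hτ] at this
  have hin : y + s • τ + T • (x₀ - y) ∈ Ω := by
    have hmem : x₀ + (s / T) • τ ∈ Ω := by
      apply hball
      rw [mem_ball_iff_norm, add_sub_cancel_left, norm_smul, Real.norm_eq_abs, abs_div,
        abs_of_pos hTpos, hT]
      have : |s| ≠ 0 := abs_ne_zero.2 hs0
      have e : |s| / ((‖τ‖ + 1) / r * |s|) * ‖τ‖ = r * (‖τ‖ / (‖τ‖ + 1)) := by field_simp
      rw [e]
      have : ‖τ‖ / (‖τ‖ + 1) < 1 := by rw [div_lt_one (by positivity)]; linarith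
      nlinarith
    have hc := hΩc.combo_closure_interior_mem_interior hy.1 (by rwa [hΩo.interior_eq] :
      x₀ + (s / T) • τ ∈ interior Ω) (a := 1 - T) (b := T) (by linarith) hTpos (by ring)
    rw [hΩo.interior_eq] at hc
    convert hc using 1
    rw [smul_add, smul_smul, mul_div_cancel₀ _ hTpos.ne']
    module
  have hconn : IsPreconnected ((fun t : ℝ => y + s • τ + t • (x₀ - y)) '' Icc 0 T) :=
    isPreconnected_Icc.image _ (by fun_prop)
  obtain ⟨t, ht, htf⟩ : ∃ t ∈ Icc 0 T, y + s • τ + t • (x₀ - y) ∈ frontier Ω := by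
    by_contra! hno
    have hcov : ∀ t ∈ Icc 0 T, y + s • τ + t • (x₀ - y) ∈ closure Ω →
        y + s • τ + t • (x₀ - y) ∈ Ω := fun t ht hcl => by
      by_contra hnot
      exact hno t ht ⟨hcl, by rwa [hΩo.interior_eq]⟩
    obtain ⟨_, -, h1, h2⟩ := hconn Ω (closure Ω)ᶜ hΩo isClosed_closure.isOpen_compl
      (by
        rintro _ ⟨t, ht, rfl⟩
        exact or_iff_not_imp_right.2 fun h => hcov t ht (not_not.1 h))
      ⟨_, ⟨T, ⟨hTpos.le, le_rfl⟩, rfl⟩, hin⟩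
      ⟨_, ⟨0, ⟨le_rfl, hTpos.le⟩, rfl⟩, fun h => hout (by
        simpa using hcov 0 ⟨le_rfl, hTpos.le⟩ h)⟩
    exact h2 (subset_closure h1)
  exact ⟨t, ht.1, ht.2, htf⟩

/-- A function vanishing on the boundary of a convex open set has vanishing derivative in all
directions tangent to a supporting hyperplane. -/
lemma fderiv_apply_eq_zero_of_tangent (hΩo : IsOpen Ω) (hΩc : Convex ℝ Ω)
    (hy : y ∈ frontier Ω) (hx₀ : x₀ ∈ Ω) (hL : ∀ z ∈ Ω, L z < L y) (hτ : L τ = 0)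
    {u : E → ℝ} (hu : DifferentiableAt ℝ u y) (hbd : ∀ x ∈ frontier Ω, u x = 0) :
    fderiv ℝ u y τ = 0 := by
  obtain ⟨K, hK, hfr⟩ := hΩc.exists_frontier_near_tangent hΩo hy hx₀ hL hτ
  set G := fderiv ℝ u y
  set e := x₀ - y
  set M := ‖τ‖ + K * ‖e‖ + 1 with hM
  have hMpos : 0 < M := by positivity
  rw [← abs_nonpos_iff]
  refine le_of_forall_pos_le_add fun η hη => ?_
  rw [zero_add]
  have ho := hu.hasFDerivAt.isLittleO.def (div_pos hη hMpos)
  obtain ⟨δ, hδ, hball⟩ := Metric.eventually_nhds_iff_ball.1 ho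
  obtain ⟨s, hs, hsK, hsδ⟩ : ∃ s > 0, K * s ≤ 1 ∧ s * M < δ := by
    refine ⟨min (1 / K) (δ / (2 * M)), by positivity, ?_, ?_⟩
    · calc K * min (1 / K) (δ / (2 * M)) ≤ K * (1 / K) := by gcongr; exact min_le_left _ _
        _ = 1 := by field_simp
    · calc min (1 / K) (δ / (2 * M)) * M ≤ δ / (2 * M) * M := by gcongr; exact min_le_right _ _
        _ = δ / 2 := by field_simp
        _ < δ := by linarith
  have key : ∀ σ : ℝ, |σ| = s → ∃ q : ℝ, 0 ≤ q ∧ |σ * G τ + q * G e| ≤ η * s := by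
    intro σ hσ
    obtain ⟨t, ht0, htK, htf⟩ := hfr σ (by rw [hσ]; exact hsK)
    rw [hσ] at htK
    refine ⟨t, ht0, ?_⟩
    have hnorm : ‖y + σ • τ + t • e - y‖ ≤ s * M := by
      rw [show y + σ • τ + t • e - y = σ • τ + t • e by abel]
      calc _ ≤ ‖σ • τ‖ + ‖t • e‖ := norm_add_le _ _
        _ = s * ‖τ‖ + t * ‖e‖ := by
          rw [norm_smul, norm_smul, Real.norm_eq_abs, Real.norm_eq_abs, hσ, abs_of_nonneg ht0]
        _ ≤ s * ‖τ‖ + K * s * ‖e‖ := by gcongr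
        _ ≤ s * M := by rw [hM]; nlinarith
    have := hball _ (by rw [mem_ball_iff_norm]; exact hnorm.trans_lt hsδ)
    rw [hbd _ htf, hbd _ hy] at this
    have e1 : G (y + σ • τ + t • e - y) = σ * G τ + t * G e := by
      rw [show y + σ • τ + t • e - y = σ • τ + t • e by abel]
      simp
    rw [e1, sub_zero, zero_sub, norm_neg, Real.norm_eq_abs] at this
    refine this.trans ?_
    calc η / M * ‖y + σ • τ + t • e - y‖ ≤ η / M * (s * M) := by gcongr
      _ = η * s := by field_simp
  obtain ⟨q₁, hq₁, h₁⟩ := key s (abs_of_pos hs)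
  obtain ⟨q₂, hq₂, h₂⟩ := key (-s) (by rw [abs_neg, abs_of_pos hs])
  rw [abs_le] at h₁ h₂ ⊢
  rcases le_total 0 (G e) with hb | hb
  · have := mul_nonneg hq₁ hb
    have := mul_nonneg hq₂ hb
    constructor <;> by_contra! hc <;> nlinarith
  · have := mul_nonneg hq₁ (neg_nonneg.2 hb)
    have := mul_nonneg hq₂ (neg_nonneg.2 hb)
    constructor <;> by_contra! hc <;> nlinarith

/-- The gradient of a function vanishing on the boundary of a convex open set is normal. -/
lemma exists_fderiv_eq_smul_of_support (hΩo : IsOpen Ω) (hΩc : Convex ℝ Ω)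
    (hy : y ∈ frontier Ω) (hx₀ : x₀ ∈ Ω) (hL : ∀ z ∈ Ω, L z < L y)
    {u : E → ℝ} (hu : DifferentiableAt ℝ u y) (hbd : ∀ x ∈ frontier Ω, u x = 0) :
    ∃ c : ℝ, fderiv ℝ u y = c • L := by
  have he : L (x₀ - y) ≠ 0 := by
    rw [map_sub]
    exact (sub_neg.2 (hL _ hx₀)).ne
  refine ⟨fderiv ℝ u y (x₀ - y) / L (x₀ - y), ?_⟩
  ext z
  have := fderiv_apply_eq_zero_of_tangent (τ := z - (L z / L (x₀ - y)) • (x₀ - y)) hΩo hΩc hy hx₀ hL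
    (by rw [map_sub L z, map_smul, smul_eq_mul, div_mul_cancel₀ _ he, sub_self]) hu hbd
  rw [map_sub, map_smul, sub_eq_zero] at this
  rw [this]
  simp only [smul_eq_mul, _root_.smul_apply]
  ring

/-- A `C²` function of one real variable with a local minimum has nonnegative second derivative. -/
lemma IsLocalMin.deriv_deriv_nonneg {φ : ℝ → ℝ} {a : ℝ} (h : IsLocalMin φ a)
    (hc : ContinuousAt φ a) : 0 ≤ deriv (deriv φ) a := by
  by_contra! hneg
  have hmax := isLocalMax_of_deriv_deriv_neg hneg h.deriv_eq_zero hc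
  have heq : φ =ᶠ[𝓝 a] fun _ => φ a := by
    filter_upwards [h, hmax] with x h1 h2 using le_antisymm h2 h1
  have : deriv φ =ᶠ[𝓝 a] fun _ => 0 := by
    filter_upwards [heq.eventuallyEq_nhds] with x hx
    rw [hx.deriv_eq, deriv_const]
  rw [this.deriv_eq, deriv_const] at hneg
  exact lt_irrefl _ hneg

/-- Sign of the tangential second derivatives on the boundary of a convex open set. -/
lemma mul_hessian_tangent_nonneg (hΩo : IsOpen Ω) (hΩc : Convex ℝ Ω)
    (hy : y ∈ frontier Ω) (hx₀ : x₀ ∈ Ω) (hL : ∀ z ∈ Ω, L z < L y) (hτ : L τ = 0)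
    {u : E → ℝ} (hu : ContDiff ℝ 2 u) (hbd : ∀ x ∈ frontier Ω, u x = 0)
    {c : ℝ} (hc : fderiv ℝ u y = c • L) :
    0 ≤ c * fderiv ℝ (fderiv ℝ u) y τ τ := by
  rcases eq_or_ne c 0 with rfl | hc0
  · simp
  have hud : Differentiable ℝ u := hu.differentiable (by norm_num)
  have hu1 : ContDiff ℝ 1 (fderiv ℝ u) := hu.fderiv_right (by norm_num)
  obtain ⟨K, hK, hfr⟩ := hΩc.exists_frontier_near_tangent hΩo hy hx₀ hL hτ
  set e := x₀ - y with he
  have hLe : L e < 0 := by rw [he, map_sub]; exact sub_neg.2 (hL _ hx₀)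
  have hneg : ∀ᶠ z in 𝓝 y, c * fderiv ℝ u z e < 0 := by
    have hcont : Continuous fun z => c * fderiv ℝ u z e :=
      continuous_const.mul (hu1.continuous.clm_apply continuous_const)
    refine hcont.continuousAt.eventually_lt continuousAt_const ?_
    simp only [hc, _root_.smul_apply, smul_eq_mul]
    rw [← mul_assoc]
    exact mul_neg_of_pos_of_neg (mul_self_pos.2 hc0) hLe
  obtain ⟨δ, hδ, hball⟩ := Metric.eventually_nhds_iff_ball.1 hneg
  have hder : ∀ s : ℝ, HasDerivAt (fun s : ℝ => c * u (y + s • τ)) (c * fderiv ℝ u (y + s • τ) τ) s := by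
    intro s
    have h1 : HasDerivAt (fun s : ℝ => y + s • τ) τ s := by
      simpa using ((hasDerivAt_id s).smul_const τ).const_add y
    exact ((hud _).hasFDerivAt.comp_hasDerivAt s h1).const_mul c
  have hder2 : HasDerivAt (fun s : ℝ => c * fderiv ℝ u (y + s • τ) τ)
      (c * fderiv ℝ (fderiv ℝ u) y τ τ) 0 := by
    have h1 : HasDerivAt (fun s : ℝ => y + s • τ) τ 0 := by
      simpa using ((hasDerivAt_id (0 : ℝ)).smul_const τ).const_add y
    have h2 : HasFDerivAt (fderiv ℝ u) (fderiv ℝ (fderiv ℝ u) y) (y + (0 : ℝ) • τ) := by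
      simpa using (hu1.differentiable one_ne_zero y).hasFDerivAt
    have h3 := h2.comp_hasDerivAt (0 : ℝ) h1
    exact ((ContinuousLinearMap.apply ℝ ℝ τ).hasFDerivAt.comp_hasDerivAt (0 : ℝ) h3).const_mul c
  have hmin : IsLocalMin (fun s : ℝ => c * u (y + s • τ)) 0 := by
    have hsmall : ∀ᶠ s : ℝ in 𝓝 0, K * |s| ≤ 1 ∧ |s| * ‖τ‖ + K * |s| * ‖e‖ < δ := by
      have c1 : ContinuousAt (fun s : ℝ => K * |s|) 0 := by fun_prop
      have c2 : ContinuousAt (fun s : ℝ => |s| * ‖τ‖ + K * |s| * ‖e‖) 0 := by fun_prop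
      filter_upwards [c1.eventually_lt (continuousAt_const (y := (1 : ℝ))) (by simp),
        c2.eventually_lt (continuousAt_const (y := δ)) (by simpa using hδ)] with s h1 h2
      exact ⟨h1.le, h2⟩
    filter_upwards [hsmall] with s ⟨hs1, hs2⟩
    obtain ⟨t, ht0, htK, htf⟩ := hfr s hs1
    simp only [zero_smul, add_zero, hbd _ hy, mul_zero]
    have hanti : AntitoneOn (fun r : ℝ => c * u (y + s • τ + r • e)) (Icc 0 t) := by
      have hd : ∀ r : ℝ, HasDerivAt (fun r : ℝ => c * u (y + s • τ + r • e))
          (c * fderiv ℝ u (y + s • τ + r • e) e) r := by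
        intro r
        have h1 : HasDerivAt (fun r : ℝ => y + s • τ + r • e) e r := by
          simpa using ((hasDerivAt_id r).smul_const e).const_add (y + s • τ)
        exact ((hud _).hasFDerivAt.comp_hasDerivAt r h1).const_mul c
      refine antitoneOn_of_deriv_nonpos (convex_Icc 0 t)
        (fun r _ => (hd r).continuousAt.continuousWithinAt)
        (fun r _ => (hd r).differentiableAt.differentiableWithinAt) fun r hr => ?_
      rw [interior_Icc] at hr
      rw [(hd r).deriv]
      refine (hball _ ?_).le
      rw [mem_ball_iff_norm, show y + s • τ + r • e - y = s • τ + r • e by abel]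
      calc _ ≤ ‖s • τ‖ + ‖r • e‖ := norm_add_le _ _
        _ = |s| * ‖τ‖ + r * ‖e‖ := by
          rw [norm_smul, norm_smul, Real.norm_eq_abs, Real.norm_eq_abs, abs_of_pos hr.1]
        _ ≤ |s| * ‖τ‖ + K * |s| * ‖e‖ := by gcongr; exact hr.2.le.trans htK
        _ < δ := hs2
    have := hanti ⟨le_rfl, ht0⟩ ⟨ht0, le_rfl⟩ ht0
    simpa [hbd _ htf] using this
  have := hmin.deriv_deriv_nonneg (hder 0).continuousAt
  rwa [show deriv (fun s : ℝ => c * u (y + s • τ)) = fun s => c * fderiv ℝ u (y + s • τ) τ from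
    funext fun s => (hder s).deriv, hder2.deriv] at this

end Boundary

section Cutoff

variable {E : Type*} [NormedAddCommGroup E] [NormedSpace ℝ E] {K : Set E} {x : E}

lemma tendsto_slope_gauge (hd : DifferentiableAt ℝ (gauge K) x) (z : E) :
    Tendsto (fun t : ℝ => t⁻¹ * (gauge K (x + t • z) - gauge K x)) (𝓝[>] 0)
      (𝓝 (fderiv ℝ (gauge K) x z)) := by
  have h1 : HasDerivAt (fun t : ℝ => gauge K (x + t • z)) (fderiv ℝ (gauge K) x z) 0 := by
    have h2 : HasDerivAt (fun t : ℝ => x + t • z) z 0 := by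
      simpa using ((hasDerivAt_id (0 : ℝ)).smul_const z).const_add x
    have h3 : HasFDerivAt (gauge K) (fderiv ℝ (gauge K) x) (x + (0 : ℝ) • z) := by
      simpa using hd.hasFDerivAt
    exact h3.comp_hasDerivAt (0 : ℝ) h2
  simpa using h1.tendsto_slope_zero_right

lemma fderiv_gauge_apply_le (hc : Convex ℝ K) (h₀ : K ∈ 𝓝 0)
    (hd : DifferentiableAt ℝ (gauge K) x) (z : E) : fderiv ℝ (gauge K) x z ≤ gauge K z := by
  refine le_of_tendsto (tendsto_slope_gauge hd z) ?_
  filter_upwards [self_mem_nhdsWithin] with t ht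
  have ht : 0 < t := ht
  have := gauge_add_le hc (absorbent_nhds_zero h₀) x (t • z)
  rw [gauge_smul_of_nonneg ht.le, smul_eq_mul] at this
  rw [inv_mul_le_iff₀ ht]
  linarith

lemma fderiv_gauge_apply_self (hd : DifferentiableAt ℝ (gauge K) x) :
    fderiv ℝ (gauge K) x x = gauge K x := by
  refine tendsto_nhds_unique (tendsto_slope_gauge hd x) (tendsto_const_nhds.congr' ?_)
  filter_upwards [self_mem_nhdsWithin] with t ht
  have ht : 0 < t := ht
  rw [show x + t • x = (1 + t) • x by module, gauge_smul_of_nonneg (by positivity), smul_eq_mul]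
  field_simp
  ring

variable [FiniteDimensional ℝ E] [MeasurableSpace E] [BorelSpace E] {ν : Measure E}
  [ν.IsAddHaarMeasure] {Ω : Set E} {x₀ : E}

/-- Lipschitz cutoff functions adapted to a bounded convex open set: where the derivative does not
vanish, it is the (scaled) inner normal at a nearby boundary point. -/
lemma Convex.exists_cutoff (hΩo : IsOpen Ω) (hΩb : Bornology.IsBounded Ω) (hΩc : Convex ℝ Ω)
    (hx₀ : x₀ ∈ Ω) :
    ∃ C > 0, ∀ ε : ℝ, 0 < ε → ε < 1 → ∃ χ : E → ℝ, (∃ D, LipschitzWith D χ) ∧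
      (∀ x, 0 ≤ χ x) ∧ (∀ x, χ x ≤ 1) ∧ (∀ x ∉ Ω, χ x = 0) ∧
      ν.real {x ∈ Ω | χ x ≠ 1} ≤ C * ε ∧
      ∀ᵐ x ∂ν, fderiv ℝ χ x = 0 ∨ (x ∈ Ω ∧ χ x ≠ 1 ∧ ∃ y ∈ frontier Ω, ∃ L : E →L[ℝ] ℝ,
        dist x y ≤ C * ε ∧ ‖L‖ ≤ C ∧ (∀ z ∈ Ω, L z < L y) ∧ fderiv ℝ χ x = -ε⁻¹ • L) := by
  set K : Set E := (fun z => z + x₀) ⁻¹' Ω with hKdef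
  have hKo : IsOpen K := hΩo.preimage (by fun_prop)
  have hKc : Convex ℝ K := hΩc.translate_preimage_left x₀
  have hK0 : (0 : E) ∈ K := by simpa [hKdef] using hx₀
  have hKn : K ∈ 𝓝 0 := hKo.mem_nhds hK0
  have hmem : ∀ x, x ∈ Ω ↔ gauge K (x - x₀) < 1 := fun x => by
    rw [gauge_lt_one_iff_mem_interior hKc hKn, hKo.interior_eq, hKdef]
    simp
  obtain ⟨D, hD⟩ := hKc.lipschitz_gauge hKn
  set ρ : E → ℝ := fun x => gauge K (x - x₀) with hρ
  have hρL : LipschitzWith D ρ := by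
    have := hD.comp ((LipschitzWith.id).sub (LipschitzWith.const x₀))
    rw [add_zero, mul_one] at this
    exact this
  obtain ⟨R, hR0, hR⟩ := hΩb.closure.subset_ball_lt 0 x₀
  have hfin : ν Ω ≠ ⊤ := hΩb.measure_lt_top.ne
  set N : ℝ := (Module.finrank ℝ E : ℝ) with hN
  refine ⟨D + R + N * ν.real Ω, by positivity, fun ε hε hε1 => ?_⟩
  set χ : E → ℝ := fun x => min 1 (max 0 (ε⁻¹ * (1 - ρ x))) with hχ
  have hχ0 : ∀ x, 0 ≤ χ x := fun x => le_min zero_le_one (le_max_left _ _)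
  have hχ1 : ∀ x, χ x ≤ 1 := fun x => min_le_left _ _
  have hχout : ∀ x ∉ Ω, χ x = 0 := fun x hx => by
    have : 1 ≤ ρ x := not_lt.1 fun h => hx ((hmem x).2 h)
    have : ε⁻¹ * (1 - ρ x) ≤ 0 := mul_nonpos_of_nonneg_of_nonpos (by positivity) (by linarith)
    simp [hχ, max_eq_left this]
  have hχin : ∀ x, ρ x ≤ 1 - ε → χ x = 1 := fun x hx => by
    have : 1 ≤ ε⁻¹ * (1 - ρ x) := by rw [le_inv_mul_iff₀ hε]; linarith
    simp [hχ, this]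
  have hχL : LipschitzWith (‖ε⁻¹‖₊ * D) χ := by
    have h1 : LipschitzWith (‖ε⁻¹‖₊ * D) (fun x => ε⁻¹ * (1 - ρ x)) := by
      have := (lipschitzWith_smul ε⁻¹).comp ((LipschitzWith.const (1 : ℝ)).sub hρL)
      rw [zero_add] at this
      exact this
    exact (h1.const_max 0).const_min 1
  refine ⟨χ, ⟨_, hχL⟩, hχ0, hχ1, hχout, ?_, ?_⟩
  · set A : Set E := {x | ρ x < 1 - ε} with hA
    have hAΩ : A ⊆ Ω := fun x hx => (hmem x).2 (lt_trans hx (by linarith))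
    have hAm : MeasurableSet A := (isOpen_lt hρL.continuous continuous_const).measurableSet
    have himg : AffineMap.homothety x₀ (1 - ε) '' Ω ⊆ A := by
      rintro _ ⟨z, hz, rfl⟩
      have hz1 := (hmem z).1 hz
      have : ρ (AffineMap.homothety x₀ (1 - ε) z) = (1 - ε) * gauge K (z - x₀) := by
        simp only [hρ, AffineMap.homothety_apply, vsub_eq_sub, vadd_eq_add, add_sub_cancel_right]
        rw [gauge_smul_of_nonneg (by linarith), smul_eq_mul]
      change ρ _ < 1 - ε
      rw [this]
      nlinarith
    have hvol : (1 - N * ε) * ν.real Ω ≤ ν.real A := by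
      have h1 : ν.real (AffineMap.homothety x₀ (1 - ε) '' Ω)
          = (1 - ε) ^ (Module.finrank ℝ E) * ν.real Ω := by
        rw [measureReal_def, Measure.addHaar_image_homothety, ENNReal.toReal_mul,
          ENNReal.toReal_ofReal (abs_nonneg _), abs_of_nonneg (pow_nonneg (by linarith) _),
          measureReal_def]
      have h2 := measureReal_mono (μ := ν) himg
        ((measure_mono hAΩ).trans_lt (lt_top_iff_ne_top.2 hfin)).ne
      have h3 : 1 - N * ε ≤ (1 - ε) ^ (Module.finrank ℝ E) := by
        have := one_add_mul_le_pow (a := -ε) (by linarith) (Module.finrank ℝ E)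
        rw [← sub_eq_add_neg 1 ε] at this
        linarith
      rw [h1] at h2
      exact (mul_le_mul_of_nonneg_right h3 measureReal_nonneg).trans h2
    have hsub : {x ∈ Ω | χ x ≠ 1} ⊆ Ω \ A := fun x hx =>
      ⟨hx.1, fun hxA => hx.2 (hχin x (le_of_lt hxA))⟩
    have h4 := measureReal_mono (μ := ν) hsub
      ((measure_mono sdiff_subset).trans_lt (lt_top_iff_ne_top.2 hfin)).ne
    rw [measureReal_sdiff hAΩ hAm] at h4
    have : 0 ≤ (D + R) * ε := by positivity
    nlinarith
  · filter_upwards [hρL.ae_differentiableAt (μ := ν)] with x hdρ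
    by_cases hx1 : χ x = 1
    · left
      exact IsLocalMax.fderiv_eq_zero (Eventually.of_forall fun z => by rw [hx1]; exact hχ1 z)
    by_cases hxΩ : x ∉ Ω
    · left
      exact IsLocalMin.fderiv_eq_zero (Eventually.of_forall fun z => by
        rw [hχout x hxΩ]; exact hχ0 z)
    rw [not_not] at hxΩ
    right
    have hρ1 : ρ x < 1 := (hmem x).1 hxΩ
    have hρε : 1 - ε < ρ x := not_le.1 fun h => hx1 (hχin x h)
    have hρ0 : 0 < ρ x := by linarith
    have hdg : DifferentiableAt ℝ (gauge K) (x - x₀) := by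
      have h1 : DifferentiableAt ℝ (fun z => ρ (z + x₀)) (x - x₀) :=
        DifferentiableAt.comp (x - x₀) (g := ρ) (by simpa using hdρ) (by fun_prop)
      simpa [hρ] using h1
    set L := fderiv ℝ (gauge K) (x - x₀) with hL
    have hLself : L (x - x₀) = ρ x := fderiv_gauge_apply_self hdg
    have hgy : gauge K ((ρ x)⁻¹ • (x - x₀)) = 1 := by
      rw [gauge_smul_of_nonneg (by positivity), smul_eq_mul]
      exact inv_mul_cancel₀ hρ0.ne'
    set y := x₀ + (ρ x)⁻¹ • (x - x₀) with hy
    have hyf : y ∈ frontier Ω := by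
      have h1 := (gauge_eq_one_iff_mem_frontier hKc hKn).1 hgy
      have h2 : K = Homeomorph.addRight x₀ ⁻¹' Ω := rfl
      rw [h2, ← (Homeomorph.addRight x₀).preimage_frontier] at h1
      rw [hy, add_comm]
      exact h1
    have hLy : L y = L x₀ + 1 := by
      rw [hy, map_add, map_smul, hLself, smul_eq_mul, inv_mul_cancel₀ hρ0.ne']
    refine ⟨hxΩ, hx1, y, hyf, L, ?_, ?_, fun z hz => ?_, ?_⟩
    · have hyR : ‖y - x₀‖ < R := mem_ball_iff_norm.1 (hR hyf.1)
      have e1 : x - y = -((1 - ρ x) • (y - x₀)) := by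
        rw [hy, add_sub_cancel_left, smul_smul, sub_mul, mul_inv_cancel₀ hρ0.ne', one_mul]
        module
      rw [dist_eq_norm, e1, norm_neg, norm_smul, Real.norm_eq_abs, abs_of_pos (by linarith)]
      have : (1 - ρ x) * ‖y - x₀‖ ≤ ε * R :=
        mul_le_mul (by linarith) hyR.le (norm_nonneg _) hε.le
      have : 0 ≤ (D + N * ν.real Ω) * ε := by positivity
      nlinarith
    · have := norm_fderiv_le_of_lipschitz ℝ hD (x₀ := x - x₀)
      have : 0 ≤ N * ν.real Ω := by positivity
      linarith
    · have h1 := fderiv_gauge_apply_le hKc hKn hdg (z - x₀)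
      have h2 := (hmem z).1 hz
      rw [← hL, map_sub] at h1
      linarith
    · have heq : χ =ᶠ[𝓝 x] fun z => ε⁻¹ * (1 - ρ z) := by
        filter_upwards [hρL.continuous.continuousAt.eventually_lt continuousAt_const hρ1,
          continuousAt_const.eventually_lt hρL.continuous.continuousAt hρε] with z h1 h2
        have h3 : 0 ≤ ε⁻¹ * (1 - ρ z) := mul_nonneg (by positivity) (by linarith)
        have h4 : ε⁻¹ * (1 - ρ z) ≤ 1 := by rw [inv_mul_le_iff₀ hε]; linarith
        simp [hχ, max_eq_right h3, min_eq_right h4]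
      have hρd : fderiv ℝ ρ x = L := fderiv_comp_sub x₀
      rw [heq.fderiv_eq, fderiv_const_mul (hdρ.const_sub 1), fderiv_const_sub, hρd,
        smul_neg]
      exact (neg_smul _ _).symm

end Cutoff

section Flux

variable {n : ℕ}

local notation "∂" => fun (j : Fin n) (f : (Fin n → ℝ) → ℝ) x => fderiv ℝ f x (Pi.single j 1)

lemma integrable_fderiv_apply_mul {C : ℝ≥0} {χ φ : (Fin n → ℝ) → ℝ} (hχ : LipschitzWith C χ)
    (hχc : HasCompactSupport χ) (hφ : Continuous φ) (a : Fin n → ℝ) :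
    Integrable (fun x => fderiv ℝ χ x a * φ x) := by
  refine (integrableOn_iff_integrable_of_support_subset (s := tsupport χ) ?_).1 ?_
  · intro x hx
    by_contra hxs
    refine hx ?_
    have : χ =ᶠ[𝓝 x] fun _ => 0 := notMem_tsupport_iff_eventuallyEq.1 hxs
    simp [this.fderiv_eq]
  · refine (hφ.continuousOn.integrableOn_compact hχc.isCompact).bdd_mul (c := C * ‖a‖)
      (measurable_fderiv_apply_const ℝ χ a).aestronglyMeasurable (Eventually.of_forall fun x => ?_)
    exact ((fderiv ℝ χ x).le_opNorm a).trans
      (mul_le_mul_of_nonneg_right (norm_fderiv_le_of_lipschitz ℝ hχ) (norm_nonneg _))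

/-- The flux `∂ⱼu Δu - ∑ₖ ∂ₖu ∂ⱼₖu` of a function vanishing on the boundary of a convex open set
points outwards on the boundary. -/
lemma boundary_flux_nonneg {Ω : Set (Fin n → ℝ)} (hΩo : IsOpen Ω) (hΩc : Convex ℝ Ω)
    {y x₀ : Fin n → ℝ} (hy : y ∈ frontier Ω) (hx₀ : x₀ ∈ Ω) {L : (Fin n → ℝ) →L[ℝ] ℝ}
    (hL : ∀ z ∈ Ω, L z < L y) {u : (Fin n → ℝ) → ℝ} (hu : ContDiff ℝ 2 u)
    (hbd : ∀ x ∈ frontier Ω, u x = 0) :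
    0 ≤ ∑ j, L (Pi.single j 1) *
      ∑ k, (∂ j u y * ∂ k (∂ k u) y - ∂ k u y * ∂ k (∂ j u) y) := by
  have hu1 : ContDiff ℝ 1 (fderiv ℝ u) := hu.fderiv_right (by norm_num)
  obtain ⟨c, hc⟩ := exists_fderiv_eq_smul_of_support hΩo hΩc hy hx₀ hL
    (hu.differentiable (by norm_num) y) hbd
  set B := fderiv ℝ (fderiv ℝ u) y with hB
  have hsymm : ∀ a b, B a b = B b a := (hu.contDiffAt.isSymmSndFDerivAt (by simp))
  have hH : ∀ j k, ∂ k (∂ j u) y = B (Pi.single k 1) (Pi.single j 1) := fun j k => by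
    simp only
    rw [fderiv_clm_apply (hu1.differentiable one_ne_zero y) (by fun_prop)]
    simp [hB]
  set ℓ : Fin n → ℝ := fun j => L (Pi.single j 1) with hℓ
  set b : Fin n → Fin n → ℝ := fun j k => B (Pi.single j 1) (Pi.single k 1) with hb
  have hpos : ∀ j k, 0 ≤ c * (ℓ j ^ 2 * b k k - 2 * (ℓ j * ℓ k * b k j) + ℓ k ^ 2 * b j j) := by
    intro j k
    have h := mul_hessian_tangent_nonneg hΩo hΩc hy hx₀ hL
      (τ := ℓ j • Pi.single k 1 - ℓ k • Pi.single j 1)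
      (by simp [hℓ, mul_comm]) hu hbd hc
    rw [← hB] at h
    simp only [map_sub, map_smul, _root_.sub_apply, _root_.smul_apply, smul_eq_mul] at h
    rw [hsymm (Pi.single j 1) (Pi.single k 1)] at h
    convert h using 2
    simp only [hb]
    ring
  have hsum : 0 ≤ ∑ j, ∑ k, c * (ℓ j ^ 2 * b k k - 2 * (ℓ j * ℓ k * b k j) + ℓ k ^ 2 * b j j) :=
    Finset.sum_nonneg fun j _ => Finset.sum_nonneg fun k _ => hpos j k
  have hswap : ∑ j, ∑ k, ℓ k ^ 2 * b j j = ∑ j, ∑ k, ℓ j ^ 2 * b k k := Finset.sum_comm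
  have e1 : ∑ j, ∑ k, c * (ℓ j ^ 2 * b k k - 2 * (ℓ j * ℓ k * b k j) + ℓ k ^ 2 * b j j)
      = 2 * (c * (∑ j, ∑ k, ℓ j ^ 2 * b k k - ∑ j, ∑ k, ℓ j * ℓ k * b k j)) := by
    have hsplit : ∑ j, ∑ k, c * (ℓ j ^ 2 * b k k - 2 * (ℓ j * ℓ k * b k j) + ℓ k ^ 2 * b j j)
        = c * (∑ j, ∑ k, ℓ j ^ 2 * b k k - 2 * (∑ j, ∑ k, ℓ j * ℓ k * b k j)
          + ∑ j, ∑ k, ℓ k ^ 2 * b j j) := by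
      simp only [Finset.mul_sum, ← Finset.sum_add_distrib, ← Finset.sum_sub_distrib]
    rw [hsplit, hswap]
    ring
  have e2 : ∑ j, L (Pi.single j 1) *
      ∑ k, (∂ j u y * ∂ k (∂ k u) y - ∂ k u y * ∂ k (∂ j u) y)
      = c * (∑ j, ∑ k, ℓ j ^ 2 * b k k - ∑ j, ∑ k, ℓ j * ℓ k * b k j) := by
    simp only [hH, hc, ← Finset.sum_sub_distrib, Finset.mul_sum]
    refine Finset.sum_congr rfl fun j _ => Finset.sum_congr rfl fun k _ => ?_
    simp only [_root_.smul_apply, smul_eq_mul, hℓ, hb]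
    ring
  rw [e2]
  linarith

/-- Weighted Bochner identity tested against a Lipschitz cutoff. -/
lemma integral_weighted_bochner {C : ℝ≥0} {χ u w : (Fin n → ℝ) → ℝ} (hχ : LipschitzWith C χ)
    (hχc : HasCompactSupport χ) (hu : ContDiff ℝ 2 u) (hw : ContDiff ℝ 1 w) :
    let F : Fin n → (Fin n → ℝ) → ℝ := fun j x =>
      ∑ k, (∂ j u x * ∂ k (∂ k u) x - ∂ k u x * ∂ k (∂ j u) x)
    let Φ : (Fin n → ℝ) → ℝ := fun x =>
      χ x * (w x * ∑ j, ∑ k, (∂ j (∂ j u) x * ∂ k (∂ k u) x - ∂ k (∂ j u) x ^ 2)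
        + ∑ j, ∂ j w x * F j x) + w x * ∑ j, ∂ j χ x * F j x
    Integrable Φ ∧ ∫ x, Φ x = 0 := by
  intro F Φ
  have hu1 : ContDiff ℝ 1 (fderiv ℝ u) := hu.fderiv_right (by norm_num)
  have hP : ∀ j, ContDiff ℝ 1 (∂ j u) := fun j => hu1.clm_apply contDiff_const
  have hcd : ∀ (j : Fin n) {f : (Fin n → ℝ) → ℝ}, ContDiff ℝ 1 f → Continuous (∂ j f) :=
    fun j f hf => (hf.continuous_fderiv one_ne_zero).clm_apply continuous_const
  have hsymm : ∀ j k x, ∂ k (∂ j u) x = ∂ j (∂ k u) x := fun j k x => by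
    simp only
    rw [fderiv_clm_apply (hu1.differentiable one_ne_zero x) (by fun_prop),
      fderiv_clm_apply (hu1.differentiable one_ne_zero x) (by fun_prop)]
    simpa using (hu.contDiffAt.isSymmSndFDerivAt (x := x) (by simp)) _ _
  have hf : ∀ j, ContDiff ℝ 1 (fun x => w x * ∂ j u x) := fun j => hw.mul (hP j)
  have hdf : ∀ j k x, fderiv ℝ (fun x => w x * ∂ j u x) x (Pi.single k 1)
      = w x * ∂ k (∂ j u) x + ∂ k w x * ∂ j u x := fun j k x => by
    rw [fderiv_fun_mul (hw.differentiable one_ne_zero x) ((hP j).differentiable one_ne_zero x)]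
    simp [mul_comm]
  have hint : ∀ j k (a b : Fin n), Integrable (fun x =>
      (χ x * fderiv ℝ (fun x => w x * ∂ j u x) x (Pi.single a 1)
        + ∂ a χ x * (w x * ∂ j u x)) * ∂ b (∂ k u) x) := by
    intro j k a b
    have h1 : Integrable (fun x => χ x * (fderiv ℝ (fun x => w x * ∂ j u x) x (Pi.single a 1)
        * ∂ b (∂ k u) x)) :=
      (hχ.continuous.mul ((hcd a (hf j)).mul (hcd b (hP k)))).integrable_of_hasCompactSupport
        hχc.mul_right
    have h2 : Integrable (fun x => ∂ a χ x * ((w x * ∂ j u x) * ∂ b (∂ k u) x)) :=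
      integrable_fderiv_apply_mul hχ hχc ((hf j).continuous.mul (hcd b (hP k))) _
    refine (h1.add h2).congr (Eventually.of_forall fun x => ?_)
    simp only [Pi.add_apply]
    ring
  set G : Fin n → Fin n → (Fin n → ℝ) → ℝ := fun j k x =>
      (χ x * fderiv ℝ (fun x => w x * ∂ j u x) x (Pi.single j 1)
        + ∂ j χ x * (w x * ∂ j u x)) * ∂ k (∂ k u) x
      - (χ x * fderiv ℝ (fun x => w x * ∂ j u x) x (Pi.single k 1)
        + ∂ k χ x * (w x * ∂ j u x)) * ∂ j (∂ k u) x with hG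
  have hGi : ∀ j k, Integrable (G j k) := fun j k => (hint j k j k).sub (hint j k k j)
  have key : ∀ j k, ∫ x, G j k x = 0 := by
    intro j k
    rw [hG, integral_sub (hint j k j k) (hint j k k j), sub_eq_zero]
    exact integral_jacobian_mul_lipschitz hχ hχc (hf j) (hP k) _ _
  have hΦ : Φ = fun x => ∑ j, ∑ k, G j k x := by
    ext x
    have hswap : ∑ j, ∑ k, (χ x * ∂ k w x + w x * ∂ k χ x) * ∂ j u x * ∂ j (∂ k u) x
        = ∑ j, ∑ k, (χ x * ∂ j w x + w x * ∂ j χ x) * ∂ k u x * ∂ k (∂ j u) x := Finset.sum_comm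
    calc Φ x = ∑ j, ∑ k, (χ x * (w x * (∂ j (∂ j u) x * ∂ k (∂ k u) x - ∂ k (∂ j u) x ^ 2))
          + (χ x * ∂ j w x + w x * ∂ j χ x) * ∂ j u x * ∂ k (∂ k u) x)
          - ∑ j, ∑ k, (χ x * ∂ j w x + w x * ∂ j χ x) * ∂ k u x * ∂ k (∂ j u) x := by
          simp only [Φ, F, Finset.mul_sum, ← Finset.sum_add_distrib, ← Finset.sum_sub_distrib]
          refine Finset.sum_congr rfl fun j _ => Finset.sum_congr rfl fun k _ => ?_
          ring
      _ = _ := by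
          rw [← hswap]
          simp only [← Finset.sum_sub_distrib, hG]
          refine Finset.sum_congr rfl fun j _ => Finset.sum_congr rfl fun k _ => ?_
          have h1 := hdf j j x
          have h2 := hdf j k x
          have h3 := hsymm j k x
          simp only at h1 h2 h3 ⊢
          rw [h1, h2, h3]
          ring
  rw [hΦ]
  refine ⟨integrable_finsetSum _ fun j _ => integrable_finsetSum _ fun k _ => hGi j k, ?_⟩
  rw [integral_finsetSum _ fun j _ => integrable_finsetSum _ fun k _ => hGi j k]
  refine Finset.sum_eq_zero fun j _ => ?_
  rw [integral_finsetSum _ fun k _ => hGi j k]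
  exact Finset.sum_eq_zero fun k _ => key j k

/-- Weighted Bochner (Miranda–Talenti type) inequality on a bounded convex open set, for a `C²`
function vanishing on the boundary and a nonnegative `C¹` weight. -/
lemma weighted_bochner_nonneg {Ω : Set (Fin n → ℝ)} (hΩo : IsOpen Ω)
    (hΩb : Bornology.IsBounded Ω) (hΩc : Convex ℝ Ω) {u w : (Fin n → ℝ) → ℝ}
    (hu : ContDiff ℝ 2 u) (hbd : ∀ x ∈ frontier Ω, u x = 0) (hw : ContDiff ℝ 1 w)
    (hw0 : ∀ x, 0 ≤ w x) :
    0 ≤ ∫ x in Ω, (w x * ∑ j, ∑ k, (∂ j (∂ j u) x * ∂ k (∂ k u) x - ∂ k (∂ j u) x ^ 2)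
        + ∑ j, ∂ j w x * ∑ k, (∂ j u x * ∂ k (∂ k u) x - ∂ k u x * ∂ k (∂ j u) x)) := by
  rcases Ω.eq_empty_or_nonempty with rfl | ⟨x₀, hx₀⟩
  · simp
  have hu1 : ContDiff ℝ 1 (fderiv ℝ u) := hu.fderiv_right (by norm_num)
  have hP : ∀ j, ContDiff ℝ 1 (∂ j u) := fun j => hu1.clm_apply contDiff_const
  have hcd : ∀ (j : Fin n) {f : (Fin n → ℝ) → ℝ}, ContDiff ℝ 1 f → Continuous (∂ j f) :=
    fun j f hf => (hf.continuous_fderiv one_ne_zero).clm_apply continuous_const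
  set F : (Fin n → ℝ) → Fin n → ℝ := fun x j =>
      ∑ k, (∂ j u x * ∂ k (∂ k u) x - ∂ k u x * ∂ k (∂ j u) x) with hF
  set Q : (Fin n → ℝ) → ℝ := fun x =>
    w x * ∑ j, ∑ k, (∂ j (∂ j u) x * ∂ k (∂ k u) x - ∂ k (∂ j u) x ^ 2)
        + ∑ j, ∂ j w x * F x j with hQ
  have hFc : Continuous F := continuous_pi fun j => continuous_finsetSum _ fun k _ =>
    ((hP j).continuous.mul (hcd k (hP k))).sub ((hP k).continuous.mul (hcd k (hP j)))
  have hQc : Continuous Q :=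
    (hw.continuous.mul (continuous_finsetSum _ fun j _ => continuous_finsetSum _ fun k _ =>
      ((hcd j (hP j)).mul (hcd k (hP k))).sub ((hcd k (hP j)).pow 2))).add
    (continuous_finsetSum _ fun j _ => (hcd j hw).mul ((continuous_apply j).comp hFc))
  change 0 ≤ ∫ x in Ω, Q x
  have hcomp : IsCompact (closure Ω) := hΩb.isCompact_closure
  obtain ⟨MQ, hMQ⟩ := hcomp.exists_bound_of_continuousOn hQc.continuousOn
  obtain ⟨Mw, hMw⟩ := hcomp.exists_bound_of_continuousOn hw.continuous.continuousOn
  have hMQ0 : 0 ≤ MQ := (norm_nonneg _).trans (hMQ x₀ (subset_closure hx₀))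
  have hMw0 : 0 ≤ Mw := (norm_nonneg _).trans (hMw x₀ (subset_closure hx₀))
  have hFu := Metric.uniformContinuousOn_iff.1
    (hcomp.uniformContinuousOn_of_continuous hFc.continuousOn)
  obtain ⟨C, hC, hcut⟩ := hΩc.exists_cutoff (ν := volume) hΩo hΩb hx₀
  have hQi : IntegrableOn Q Ω :=
    (hQc.continuousOn.integrableOn_compact hcomp).mono_set subset_closure
  have main : ∀ δ > 0, -(C * (MQ + Mw * (n * (C * 1))) * δ) ≤ ∫ x in Ω, Q x := by
    intro δ hδ
    obtain ⟨δ', hδ', hFδ⟩ := hFu δ hδ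
    obtain ⟨ε, hε, hε1, hεδ, hεδ'⟩ : ∃ ε > 0, ε < 1 ∧ ε ≤ δ ∧ C * ε < δ' := by
      refine ⟨min (1 / 2) (min δ (δ' / (2 * C))), by positivity,
        (min_le_left _ _).trans_lt (by norm_num), (min_le_right _ _).trans (min_le_left _ _), ?_⟩
      calc C * min (1 / 2) (min δ (δ' / (2 * C))) ≤ C * (δ' / (2 * C)) := by
            gcongr
            exact (min_le_right _ _).trans (min_le_right _ _)
        _ = δ' / 2 := by field_simp
        _ < δ' := by linarith
    obtain ⟨χ, ⟨D, hχL⟩, hχ0, hχ1, hχout, hvol, hder⟩ := hcut ε hε hε1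
    have hχc : HasCompactSupport χ := HasCompactSupport.intro hcomp fun x hx =>
      hχout x fun h => hx (subset_closure h)
    obtain ⟨hΦi, hΦ0⟩ := integral_weighted_bochner hχL hχc hu hw
    set S : Set (Fin n → ℝ) := {x ∈ Ω | χ x ≠ 1} with hS
    have hSm : MeasurableSet S :=
      hΩo.measurableSet.inter (isOpen_ne_fun hχL.continuous continuous_const).measurableSet
    have hSfin : volume S ≠ ⊤ :=
      ((measure_mono fun x hx => hx.1).trans_lt hΩb.measure_lt_top).ne
    set T : ℝ := Mw * (n * (C * δ)) with hT
    have hpt : ∀ᵐ x, (χ x * Q x + w x * ∑ j, ∂ j χ x * F x j)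
        - S.indicator (fun _ => MQ + ε⁻¹ * T) x ≤ Ω.indicator Q x := by
      filter_upwards [hder] with x hx
      by_cases hxΩ : x ∈ Ω
      swap
      · have hxS : x ∉ S := fun h => hxΩ h.1
        have h0 : fderiv ℝ χ x = 0 := hx.resolve_right fun h => hxΩ h.1
        simp [hxS, hxΩ, hχout x hxΩ, h0]
      rw [indicator_of_mem hxΩ]
      have hxc : x ∈ closure Ω := subset_closure hxΩ
      have hflux : w x * ∑ j, ∂ j χ x * F x j ≤ ε⁻¹ * T := by
        rcases hx with h0 | ⟨-, -, y, hy, L, hxy, hLC, hLy, hχx⟩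
        · simp only [h0, _root_.zero_apply, zero_mul, Finset.sum_const_zero, mul_zero]
          positivity
        · have hyc : y ∈ closure Ω := hy.1
          have hnn : 0 ≤ ∑ j, L (Pi.single j 1) * F y j :=
            boundary_flux_nonneg hΩo hΩc hy hx₀ hLy hu hbd
          have hdist := hFδ x hxc y hyc (hxy.trans_lt hεδ')
          have hbound : -∑ j, L (Pi.single j 1) * F x j ≤ n * (C * δ) := by
            calc -∑ j, L (Pi.single j 1) * F x j
                ≤ ∑ j, L (Pi.single j 1) * F y j - ∑ j, L (Pi.single j 1) * F x j := by linarith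
              _ = ∑ j, L (Pi.single j 1) * (F y j - F x j) := by
                  rw [← Finset.sum_sub_distrib]
                  exact Finset.sum_congr rfl fun j _ => by ring
              _ ≤ ∑ _j : Fin n, C * δ := by
                  refine Finset.sum_le_sum fun j _ => ?_
                  have h1 : |L (Pi.single j 1)| ≤ C := by
                    have := L.le_opNorm (Pi.single j 1)
                    rw [Pi.norm_single, norm_one, mul_one] at this
                    exact this.trans hLC
                  have h2 : |F y j - F x j| ≤ δ := by
                    rw [← Real.dist_eq, dist_comm]
                    exact (dist_le_pi_dist _ _ j).trans hdist.le
                  refine (le_abs_self _).trans ?_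
                  rw [abs_mul]
                  exact mul_le_mul h1 h2 (abs_nonneg _) hC.le
              _ = n * (C * δ) := by simp
          have e1 : ∑ j, ∂ j χ x * F x j = ε⁻¹ * -∑ j, L (Pi.single j 1) * F x j := by
            rw [← Finset.sum_neg_distrib, Finset.mul_sum]
            refine Finset.sum_congr rfl fun j _ => ?_
            simp only [hχx, _root_.smul_apply, smul_eq_mul]
            ring
          have hwx : w x ≤ Mw := (le_abs_self _).trans (hMw x hxc)
          rw [e1]
          calc w x * (ε⁻¹ * -∑ j, L (Pi.single j 1) * F x j)
              ≤ w x * (ε⁻¹ * (n * (C * δ))) := by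
                gcongr
                exact hw0 x
            _ ≤ Mw * (ε⁻¹ * (n * (C * δ))) := by gcongr
            _ = ε⁻¹ * T := by rw [hT]; ring
      by_cases hxS : x ∈ S
      · rw [indicator_of_mem hxS]
        have h1 : |Q x| ≤ MQ := hMQ x hxc
        have h2 : (χ x - 1) * Q x ≤ MQ := by
          refine (le_abs_self _).trans ?_
          rw [abs_mul]
          have h3 : |χ x - 1| ≤ 1 := abs_le.2 ⟨by linarith [hχ0 x], by linarith [hχ1 x]⟩
          nlinarith [abs_nonneg (Q x)]
        linarith
      · have hχx : χ x = 1 := by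
          by_contra h
          exact hxS ⟨hxΩ, h⟩
        have h0 : fderiv ℝ χ x = 0 := hx.resolve_right fun h => h.2.1 hχx
        simp [hxS, hχx, h0]
    have hIi : Integrable (S.indicator fun _ => MQ + ε⁻¹ * T) :=
      (integrable_indicator_iff hSm).2 (integrableOn_const hSfin)
    have hmono := integral_mono_ae (hΦi.sub hIi)
      ((integrable_indicator_iff hΩo.measurableSet).2 hQi) hpt
    rw [integral_indicator hΩo.measurableSet, integral_sub' hΦi hIi, hΦ0,
      integral_indicator hSm, setIntegral_const, smul_eq_mul] at hmono
    have hle : volume.real S * (MQ + ε⁻¹ * T) ≤ C * ε * (MQ + ε⁻¹ * T) :=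
      mul_le_mul_of_nonneg_right hvol (by positivity)
    have e2 : C * ε * (MQ + ε⁻¹ * T) = C * (MQ * ε + T) := by field_simp
    have hle2 : C * (MQ * ε + T) ≤ C * (MQ * δ + T) := by gcongr
    have e3 : C * (MQ * δ + T) = C * (MQ + Mw * (n * (C * 1))) * δ := by rw [hT]; ring
    linarith
  by_contra! hneg
  set B := C * (MQ + Mw * (n * (C * 1))) with hB
  have hB0 : 0 ≤ B := by positivity
  have h := main ((-∫ x in Ω, Q x) / (B + 1)) (div_pos (by linarith) (by linarith))
  have h2 : B * ((-∫ x in Ω, Q x) / (B + 1)) = (-∫ x in Ω, Q x) * (B / (B + 1)) := by ring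
  have h3 : B / (B + 1) < 1 := by rw [div_lt_one (by linarith)]; linarith
  rw [h2] at h
  nlinarith

end Flux

section Pointwise

variable {n : ℕ}

lemma sum_sum_mul_sq_le (a b : Fin n → Fin n → ℝ) :
    (∑ i, ∑ k, a i k * b i k) ^ 2 ≤ (∑ i, ∑ k, a i k ^ 2) * ∑ i, ∑ k, b i k ^ 2 := by
  simpa only [Fintype.sum_prod_type] using Finset.sum_mul_sq_le_sq_mul_sq Finset.univ
    (fun z : Fin n × Fin n => a z.1 z.2) (fun z => b z.1 z.2)

/-- Cauchy–Schwarz and Young bound for the weighted Bochner integrand. -/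
lemma weighted_bochner_integrand_le (A : Fin n → Fin n → ℝ) (H : Fin n → Fin n → Fin n → ℝ)
    {w c p : ℝ} (hc : 0 ≤ c) (hcw : c * ∑ i, ∑ k, A i k ^ 2 ≤ w) (hp1 : 3 / 2 < p)
    (hp2 : p ≤ 2) :
    ∑ i, (w * ∑ j, ∑ k, (H i j j * H i k k - H i j k ^ 2)
      + ∑ j, (2 * (p - 2) * c * ∑ l, ∑ m, A l m * H l j m) *
          ∑ k, (A i j * H i k k - A i k * H i j k))
      ≤ (p - 1) / (2 * p - 3) * (w * ∑ i, (∑ j, H i j j) ^ 2)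
        - (p - 1) * (2 * p - 3) * (w * ∑ i, ∑ j, ∑ k, H i j k ^ 2) := by
  set N := ∑ i, ∑ k, A i k ^ 2 with hN
  set X := ∑ i, ∑ j, ∑ k, H i j k ^ 2 with hX
  set Y := ∑ i, (∑ j, H i j j) ^ 2 with hY
  set g : Fin n → ℝ := fun j => ∑ l, ∑ m, A l m * H l j m with hg
  set h : Fin n → ℝ := fun j => ∑ i, A i j * ∑ k, H i k k with hh
  set q := 2 * p - 3 with hq
  have hq0 : 0 < q := by linarith
  have hX0 : 0 ≤ X := by positivity
  have hY0 : 0 ≤ Y := by positivity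
  have hgX : ∑ j, g j ^ 2 ≤ N * X := by
    rw [hX, Finset.sum_comm, Finset.mul_sum]
    exact Finset.sum_le_sum fun j _ => sum_sum_mul_sq_le A fun l m => H l j m
  have hhY : ∑ j, h j ^ 2 ≤ N * Y := by
    rw [hN, Finset.sum_comm, Finset.sum_mul]
    exact Finset.sum_le_sum fun j _ => Finset.sum_mul_sq_le_sq_mul_sq _ _ _
  have hgh : -(2 * ∑ j, g j * h j) ≤ q * ∑ j, g j ^ 2 + q⁻¹ * ∑ j, h j ^ 2 := by
    rw [Finset.mul_sum, Finset.mul_sum, Finset.mul_sum, ← Finset.sum_neg_distrib,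
      ← Finset.sum_add_distrib]
    refine Finset.sum_le_sum fun j _ => ?_
    have e : q * g j ^ 2 + q⁻¹ * h j ^ 2 + 2 * (g j * h j) = q⁻¹ * (q * g j + h j) ^ 2 := by
      field_simp
      ring
    have : 0 ≤ q⁻¹ * (q * g j + h j) ^ 2 := by positivity
    linarith
  have e1 : ∀ i, ∑ j, ∑ k, (H i j j * H i k k - H i j k ^ 2)
      = (∑ j, H i j j) ^ 2 - ∑ j, ∑ k, H i j k ^ 2 := fun i => by
    rw [sq, Finset.sum_mul_sum]
    simp only [Finset.sum_sub_distrib]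
  have e2 : ∑ i, ∑ j, (2 * (p - 2) * c * g j) * ∑ k, (A i j * H i k k - A i k * H i j k)
      = 2 * (p - 2) * c * (∑ j, g j * h j - ∑ j, g j ^ 2) := by
    rw [Finset.sum_comm, ← Finset.sum_sub_distrib, Finset.mul_sum]
    refine Finset.sum_congr rfl fun j _ => ?_
    rw [← Finset.mul_sum]
    have : ∑ i, ∑ k, (A i j * H i k k - A i k * H i j k) = h j - g j := by
      simp only [hh, hg, Finset.sum_sub_distrib, Finset.mul_sum]
    rw [this]
    ring
  have e3 : ∑ i, (w * ∑ j, ∑ k, (H i j j * H i k k - H i j k ^ 2)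
      + ∑ j, (2 * (p - 2) * c * g j) * ∑ k, (A i j * H i k k - A i k * H i j k))
      = w * (Y - X) + 2 * (p - 2) * c * (∑ j, g j * h j - ∑ j, g j ^ 2) := by
    rw [Finset.sum_add_distrib, e2, ← Finset.mul_sum, Finset.sum_congr rfl fun i _ => e1 i,
      Finset.sum_sub_distrib]
  rw [e3]
  clear_value N X Y g h q
  have hp0 : 0 ≤ 2 - p := by linarith
  have b1 : (2 - p) * c * -(2 * ∑ j, g j * h j)
      ≤ (2 - p) * c * (q * (N * X) + q⁻¹ * (N * Y)) := by
    gcongr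
    exact hgh.trans (by gcongr)
  have b2 : 2 * (2 - p) * c * ∑ j, g j ^ 2 ≤ 2 * (2 - p) * c * (N * X) := by gcongr
  have b3 : (2 - p) * (q + 2) * ((c * N) * X) ≤ (2 - p) * (q + 2) * (w * X) := by gcongr
  have b4 : (2 - p) * q⁻¹ * ((c * N) * Y) ≤ (2 - p) * q⁻¹ * (w * Y) := by gcongr
  have e4 : (p - 1) / q * (w * Y) - (p - 1) * q * (w * X)
      = w * (Y - X) + (2 - p) * (q + 2) * (w * X) + (2 - p) * q⁻¹ * (w * Y) := by
    have : (p - 1) / q = 1 + (2 - p) * q⁻¹ := by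
      field_simp
      rw [hq]
      ring
    rw [this, hq]
    ring
  rw [e4]
  linarith

end Pointwise

end Bochner

section VectorField

variable {n : ℕ} {v : (Fin n → ℝ) → Fin n → ℝ}

lemma Dmat_apply_eq (hv : ContDiff ℝ 2 v) (x : Fin n → ℝ) (i j : Fin n) :
    Dmat v x i j = fderiv ℝ (fun y => v y i) x (Pi.single j 1) := by
  rw [fderiv_apply (hv.differentiable (by norm_num) x)]
  rfl

lemma contDiff_Dmat (hv : ContDiff ℝ 2 v) (i j : Fin n) :
    ContDiff ℝ 1 (fun x => Dmat v x i j) :=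
  contDiff_pi.1 ((hv.fderiv_right (by norm_num)).clm_apply contDiff_const) i

lemma continuous_D3 (hv : ContDiff ℝ 2 v) (i j k : Fin n) :
    Continuous (fun x => D3 v x i j k) :=
  ((contDiff_Dmat hv i j).continuous_fderiv one_ne_zero).clm_apply continuous_const

lemma D3_comm (hv : ContDiff ℝ 2 v) (x : Fin n → ℝ) (i j k : Fin n) :
    D3 v x i j k = D3 v x i k j := by
  have hu : ContDiff ℝ 2 (fun y => v y i) := contDiff_pi.1 hv i
  have hu1 : ContDiff ℝ 1 (fderiv ℝ fun y => v y i) := hu.fderiv_right (by norm_num)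
  simp only [D3, Dmat_apply_eq hv]
  rw [fderiv_clm_apply (hu1.differentiable one_ne_zero x) (by fun_prop),
    fderiv_clm_apply (hu1.differentiable one_ne_zero x) (by fun_prop)]
  simpa using (hu.contDiffAt.isSymmSndFDerivAt (x := x) (by simp)) _ _

lemma contDiff_frobSq_Dmat (hv : ContDiff ℝ 2 v) :
    ContDiff ℝ 1 (fun x => frobSq (Dmat v x)) :=
  ContDiff.sum fun i _ => ContDiff.sum fun j _ => (contDiff_Dmat hv i j).pow 2

lemma frobSq_nonneg (A : Matrix (Fin n) (Fin n) ℝ) : 0 ≤ frobSq A := by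
  unfold frobSq
  positivity

lemma fderiv_frobSq_Dmat (hv : ContDiff ℝ 2 v) (x : Fin n → ℝ) (j : Fin n) :
    fderiv ℝ (fun x => frobSq (Dmat v x)) x (Pi.single j 1)
      = 2 * ∑ l, ∑ m, Dmat v x l m * D3 v x l j m := by
  have hd : ∀ l m, DifferentiableAt ℝ (fun x => Dmat v x l m) x := fun l m =>
    (contDiff_Dmat hv l m).differentiable one_ne_zero x
  simp only [frobSq]
  rw [fderiv_fun_sum fun l _ => DifferentiableAt.fun_sum fun m _ => (hd l m).fun_pow 2]
  simp only [_root_.sum_apply, Finset.mul_sum]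
  refine Finset.sum_congr rfl fun l _ => ?_
  rw [fderiv_fun_sum fun m _ => (hd l m).fun_pow 2]
  simp only [_root_.sum_apply]
  refine Finset.sum_congr rfl fun m _ => ?_
  rw [fderiv_fun_pow 2 (hd l m), D3_comm hv x l j m]
  simp [D3]
  ring

lemma fderiv_weight (hv : ContDiff ℝ 2 v) {μ : ℝ} (hμ : 0 < μ) (p : ℝ) (x : Fin n → ℝ)
    (j : Fin n) :
    fderiv ℝ (fun x => (μ + frobSq (Dmat v x)) ^ (p - 2)) x (Pi.single j 1)
      = 2 * (p - 2) * (μ + frobSq (Dmat v x)) ^ (p - 3)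
        * ∑ l, ∑ m, Dmat v x l m * D3 v x l j m := by
  have hd : HasFDerivAt (fun x => μ + frobSq (Dmat v x))
      (fderiv ℝ (fun x => frobSq (Dmat v x)) x) x :=
    (((contDiff_frobSq_Dmat hv).differentiable one_ne_zero x).hasFDerivAt).const_add μ
  have hne : μ + frobSq (Dmat v x) ≠ 0 := by linarith [frobSq_nonneg (Dmat v x)]
  rw [(hd.rpow_const (p := p - 2) (Or.inl hne)).fderiv, _root_.smul_apply,
    fderiv_frobSq_Dmat hv, smul_eq_mul, show p - 2 - 1 = p - 3 by ring]
  ring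

end VectorField

/-- Weighted second-derivative estimate on a bounded convex (C²) domain: for `μ > 0`,
`p ∈ (3/2, 2]` and `v ∈ W^{2,2}(Ω) ∩ W₀^{1,2}(Ω)` (here: `C²` and vanishing on `∂Ω`),
`∫_Ω (μ+|∇v|²)^{p−2}|∇∇v|² ≤ (1/(2p−3))² ∫_Ω (μ+|∇v|²)^{p−2}|Δv|²`. -/
theorem stmt8 (n : ℕ) (hn : 3 ≤ n) (Ω : Set (Fin n → ℝ)) (hΩo : IsOpen Ω)
    (hΩb : Bornology.IsBounded Ω) (hΩc : Convex ℝ Ω)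
    (μ p : ℝ) (hμ : 0 < μ) (hp1 : 3 / 2 < p) (hp2 : p ≤ 2)
    (v : (Fin n → ℝ) → Fin n → ℝ) (hv : ContDiff ℝ 2 v)
    (hbd : ∀ x ∈ frontier Ω, v x = 0) :
    ∫ x in Ω, (μ + frobSq (Dmat v x)) ^ (p - 2) * (∑ i, ∑ j, ∑ k, (D3 v x i j k) ^ 2)
      ≤ (1 / (2 * p - 3)) ^ 2 *
        ∫ x in Ω, (μ + frobSq (Dmat v x)) ^ (p - 2) * (∑ i, (∑ j, D3 v x i j j) ^ 2) := by
  set w : (Fin n → ℝ) → ℝ := fun x => (μ + frobSq (Dmat v x)) ^ (p - 2) with hw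
  have hpos : ∀ x, 0 < μ + frobSq (Dmat v x) := fun x => by linarith [frobSq_nonneg (Dmat v x)]
  have hwC : ContDiff ℝ 1 w :=
    (contDiff_const.add (contDiff_frobSq_Dmat hv)).rpow_const_of_ne fun x => (hpos x).ne'
  have hintOn : ∀ {f : (Fin n → ℝ) → ℝ}, Continuous f → IntegrableOn f Ω := fun hf =>
    (hf.continuousOn.integrableOn_compact hΩb.isCompact_closure).mono_set subset_closure
  set T : Fin n → (Fin n → ℝ) → ℝ := fun i x =>
    w x * ∑ j, ∑ k, (D3 v x i j j * D3 v x i k k - D3 v x i j k ^ 2)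
      + ∑ j, (2 * (p - 2) * (μ + frobSq (Dmat v x)) ^ (p - 3)
            * ∑ l, ∑ m, Dmat v x l m * D3 v x l j m) *
          ∑ k, (Dmat v x i j * D3 v x i k k - Dmat v x i k * D3 v x i j k) with hT
  have hcw : Continuous fun x => (μ + frobSq (Dmat v x)) ^ (p - 3) :=
    (continuous_const.add (contDiff_frobSq_Dmat hv).continuous).rpow_const
      fun x => Or.inl (hpos x).ne'
  have hcD := fun i j => (contDiff_Dmat hv i j).continuous
  have hcH := continuous_D3 hv
  have hcw' := hwC.continuous
  have hTc : ∀ i, Continuous (T i) := fun i => by fun_prop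
  have hT0 : ∀ i, 0 ≤ ∫ x in Ω, T i x := by
    intro i
    have h := weighted_bochner_nonneg hΩo hΩb hΩc (contDiff_pi.1 hv i)
      (fun x hx => by rw [hbd x hx]; rfl) hwC fun x => Real.rpow_nonneg (hpos x).le _
    simp only [← Dmat_apply_eq hv, hw, fderiv_weight hv hμ] at h
    exact h
  have hsum : 0 ≤ ∫ x in Ω, ∑ i, T i x := by
    rw [integral_finsetSum _ fun i _ => hintOn (hTc i)]
    exact Finset.sum_nonneg fun i _ => hT0 i
  have hXi : IntegrableOn (fun x => w x * ∑ i, ∑ j, ∑ k, D3 v x i j k ^ 2) Ω :=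
    hintOn (by fun_prop)
  have hYi : IntegrableOn (fun x => w x * ∑ i, (∑ j, D3 v x i j j) ^ 2) Ω :=
    hintOn (by fun_prop)
  have hle : ∫ x in Ω, ∑ i, T i x ≤ ∫ x in Ω,
      ((p - 1) / (2 * p - 3) * (w x * ∑ i, (∑ j, D3 v x i j j) ^ 2)
        - (p - 1) * (2 * p - 3) * (w x * ∑ i, ∑ j, ∑ k, D3 v x i j k ^ 2)) := by
    refine integral_mono (hintOn (by fun_prop)) ((hYi.const_mul _).sub (hXi.const_mul _)) fun x => ?_
    refine weighted_bochner_integrand_le (Dmat v x) (D3 v x)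
      (Real.rpow_nonneg (hpos x).le _) ?_ hp1 hp2
    have e : w x = (μ + frobSq (Dmat v x)) ^ (p - 3) * (μ + frobSq (Dmat v x)) := by
      rw [← Real.rpow_add_one (hpos x).ne', show p - 3 + 1 = p - 2 by ring]
    rw [e]
    exact mul_le_mul_of_nonneg_left (by simp only [frobSq]; linarith)
      (Real.rpow_nonneg (hpos x).le _)
  rw [integral_sub (hYi.const_mul _) (hXi.const_mul _), integral_const_mul,
    integral_const_mul] at hle
  have hfin := hsum.trans hle
  set X := ∫ x in Ω, w x * ∑ i, ∑ j, ∑ k, D3 v x i j k ^ 2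
  set Y := ∫ x in Ω, w x * ∑ i, (∑ j, D3 v x i j j) ^ 2
  have hq : 0 < 2 * p - 3 := by linarith
  have hp : 0 < p - 1 := by linarith
  generalize 2 * p - 3 = q at hfin hq ⊢
  have e : (p - 1) / q * Y - (p - 1) * q * X = (p - 1) * q * ((1 / q) ^ 2 * Y - X) := by
    field_simp
  rw [e] at hfin
  linarith [nonneg_of_mul_nonneg_right hfin (by positivity)]
end
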